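/- Let m ≥ 18 and n ≥ m² − m + 1 be integers and let U be any connected graph with n vertices and exactly n edges (a unicyclic graph). Then every graph G on 2n − 1 vertices either contains the fan F_m as a subgraph or its complement contains U as a subgraph. (This is the upper bound R(U, F_m) ≤ 2n − 1 of Theorem 5; together with the standard lower bound it gives R(U, F_m) = 2n − 1.) -/

import Mathlib

/-- `Contains G H` means `G` contains a subgraph isomorphic to `H`, i.e. there is an
injective map on vertices preserving adjacency. -/
def Contains {α β : Type*} (G : SimpleGraph α) (H : SimpleGraph β) : Prop :=
  ∃ f : β → α, Function.Injective f ∧ ∀ ⦃u v⦄, H.Adj u v → G.Adj (f u) (f v)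

/-- The fan `F_m = K_1 + mK_2`: a center vertex joined to `m` disjoint edges,
so `m` triangles sharing exactly one common vertex; it has `2m + 1` vertices. -/
def fan (m : ℕ) : SimpleGraph (Unit ⊕ Fin m × Bool) :=
  SimpleGraph.fromRel (fun x y =>
    (∃ u, x = Sum.inl u) ∨ ∃ i : Fin m, x = Sum.inr (i, true) ∧ y = Sum.inr (i, false))

namespace RUF

open Classical Finset

/-- neighbours of `x` inside `S` -/
noncomputable def nb {W : Type*} (G : SimpleGraph W) (S : Finset W) (x : W) : Finset W :=
  S.filter (fun y => G.Adj x y)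

/-- `K` is independent in `G` -/
def Ind {W : Type*} (G : SimpleGraph W) (K : Finset W) : Prop :=
  ∀ x ∈ K, ∀ y ∈ K, ¬ G.Adj x y

/-- a matching inside `S` with left endpoints `M` and partner function `g` -/
structure IsMat {W : Type*} (G : SimpleGraph W) (S M : Finset W) (g : W → W) : Prop where
  mem : ∀ x ∈ M, x ∈ S
  gmem : ∀ x ∈ M, g x ∈ S
  gnot : ∀ x ∈ M, g x ∉ M
  adj : ∀ x ∈ M, G.Adj x (g x)
  inj : ∀ x ∈ M, ∀ y ∈ M, g x = g y → x = y

section basics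
variable {W : Type*} {G : SimpleGraph W}

lemma mem_nb {S : Finset W} {x y : W} : y ∈ nb G S x ↔ y ∈ S ∧ G.Adj x y := by
  simp [nb]

lemma nb_sub (S : Finset W) (x : W) : nb G S x ⊆ S := Finset.filter_subset _ _

lemma nb_mono {S T : Finset W} (h : S ⊆ T) (x : W) : nb G S x ⊆ nb G T x :=
  Finset.filter_subset_filter _ h

lemma nb_card_mono {S T : Finset W} (h : S ⊆ T) (x : W) : (nb G S x).card ≤ (nb G T x).card :=
  Finset.card_le_card (nb_mono h x)

lemma nb_compl_notmem {S : Finset W} {x : W} (h : x ∉ S) :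
    (nb G S x).card + (nb Gᶜ S x).card = S.card := by
  rw [← Finset.card_union_of_disjoint]
  · congr 1
    ext y
    simp only [mem_union, mem_nb, SimpleGraph.compl_adj]
    constructor
    · tauto
    · intro hy
      have : x ≠ y := by rintro rfl; exact h hy
      tauto
  · rw [Finset.disjoint_left]
    intro y hy hy'
    simp only [mem_nb, SimpleGraph.compl_adj] at hy hy'
    tauto

lemma nb_compl_mem {S : Finset W} {x : W} (h : x ∈ S) :
    (nb G S x).card + (nb Gᶜ S x).card + 1 = S.card := by
  have h1 := nb_compl_notmem (G := G) (S := S.erase x) (x := x) (by simp)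
  have e1 : ∀ G : SimpleGraph W, nb G (S.erase x) x = nb G S x := by
    intro G
    ext y
    simp only [mem_nb, mem_erase]
    constructor
    · tauto
    · rintro ⟨a, b⟩; exact ⟨⟨b.ne', a⟩, b⟩
  rw [e1, e1] at h1
  rw [h1, Finset.card_erase_add_one h]

lemma nb_union_card {S T : Finset W} (h : Disjoint S T) (x : W) :
    (nb G (S ∪ T) x).card = (nb G S x).card + (nb G T x).card := by
  rw [← Finset.card_union_of_disjoint]
  · congr 1; ext y; simp only [mem_nb, mem_union]; tauto
  · exact Finset.disjoint_of_subset_left (nb_sub _ _)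
      (Finset.disjoint_of_subset_right (nb_sub _ _) h)

lemma Ind.mono {K L : Finset W} (h : Ind G L) (hs : K ⊆ L) : Ind G K :=
  fun x hx y hy => h x (hs hx) y (hs hy)

lemma Ind.compl_adj {K : Finset W} (h : Ind G K) {x y : W} (hx : x ∈ K) (hy : y ∈ K)
    (hne : x ≠ y) : Gᶜ.Adj x y := by
  rw [SimpleGraph.compl_adj]; exact ⟨hne, h x hx y hy⟩

lemma exists_sdr {ι α : Type*} [Nonempty α] (s : Finset ι) (A : ι → Finset α)
    (h : ∀ i ∈ s, s.card ≤ (A i).card) :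
    ∃ f : ι → α, (∀ i ∈ s, ∀ j ∈ s, f i = f j → i = j) ∧ ∀ i ∈ s, f i ∈ A i := by
  suffices H : ∀ t : Finset ι, t ⊆ s →
      ∃ f : ι → α, (∀ i ∈ t, ∀ j ∈ t, f i = f j → i = j) ∧ ∀ i ∈ t, f i ∈ A i from H s le_rfl
  intro t
  induction t using Finset.induction_on with
  | empty => intro _; exact ⟨fun _ => Classical.arbitrary α, by simp, by simp⟩
  | insert a t ha ih =>
    intro hts
    obtain ⟨f, hf1, hf2⟩ := ih (fun x hx => hts (mem_insert_of_mem hx))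
    have hcard : (t.image f).card < (A a).card := by
      have h1 := h a (hts (mem_insert_self a t))
      have h2 : (insert a t).card ≤ s.card := card_le_card hts
      rw [card_insert_of_notMem ha] at h2
      have h3 : (t.image f).card ≤ t.card := card_image_le
      omega
    obtain ⟨b, hb, hb'⟩ := exists_mem_notMem_of_card_lt_card hcard
    have hb2 : ∀ i ∈ t, f i ≠ b := fun i hi e => hb' (mem_image.2 ⟨i, hi, e⟩)
    have hne : ∀ i ∈ t, i ≠ a := fun i hi e => ha (e ▸ hi)
    refine ⟨Function.update f a b, ?_, ?_⟩
    · intro i hi j hj hij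
      rcases mem_insert.1 hi with hi1 | hi1 <;> rcases mem_insert.1 hj with hj1 | hj1
      · rw [hi1, hj1]
      · rw [hi1, Function.update_self, Function.update_of_ne (hne j hj1)] at hij
        exact absurd hij.symm (hb2 j hj1)
      · rw [hj1, Function.update_self, Function.update_of_ne (hne i hi1)] at hij
        exact absurd hij (hb2 i hi1)
      · rw [Function.update_of_ne (hne i hi1), Function.update_of_ne (hne j hj1)] at hij
        exact hf1 i hi1 j hj1 hij
    · intro i hi
      rcases mem_insert.1 hi with rfl | hi
      · rwa [Function.update_self]
      · rw [Function.update_of_ne (hne i hi)]; exact hf2 i hi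

end basics

section fans
variable {W : Type*} [Fintype W] {G : SimpleGraph W} {m : ℕ}

lemma fan_of_mat {v : W} {M : Finset W} {g : W → W}
    (h : IsMat G (nb G univ v) M g) (hm : m ≤ M.card) : Contains G (fan m) := by
  obtain ⟨M', hM', hc⟩ := Finset.exists_subset_card_eq hm
  let e : Fin m ≃ M' := (finCongr hc.symm).trans M'.equivFin.symm
  have he : ∀ i, (e i : W) ∈ M := fun i => hM' (e i).2
  have hv : ∀ x ∈ M, G.Adj v x := fun x hx => (mem_nb.1 (h.mem x hx)).2
  have hv' : ∀ x ∈ M, G.Adj v (g x) := fun x hx => (mem_nb.1 (h.gmem x hx)).2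
  let f : Unit ⊕ Fin m × Bool → W := fun x => match x with
    | Sum.inl _ => v
    | Sum.inr (i, true) => e i
    | Sum.inr (i, false) => g (e i)
  have hinj : ∀ i j, (e i : W) = e j → i = j := fun i j hij => e.injective (Subtype.ext hij)
  have hvf : ∀ y, G.Adj v (f (Sum.inr y)) := by
    rintro ⟨i, _ | _⟩
    · exact hv' _ (he i)
    · exact hv _ (he i)
  refine ⟨f, ?_, ?_⟩
  · rintro (u | ⟨i, _ | _⟩) (u' | ⟨j, _ | _⟩) hxy
    · rfl
    · exact absurd hxy (hvf (j, false)).ne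
    · exact absurd hxy (hvf (j, true)).ne
    · exact absurd hxy.symm (hvf (i, false)).ne
    · have := hinj _ _ (h.inj _ (he i) _ (he j) hxy)
      rw [this]
    · exact absurd (show g (e i) ∈ M by rw [show g (e i) = e j from hxy]; exact he j)
        (h.gnot _ (he i))
    · exact absurd hxy.symm (hvf (i, true)).ne
    · exact absurd (show g (e j) ∈ M by rw [← show (e i : W) = g (e j) from hxy]; exact he i)
        (h.gnot _ (he j))
    · have := hinj _ _ hxy
      rw [this]
  · have key : ∀ x y, x ≠ y → ((∃ u, x = Sum.inl u) ∨
        ∃ i : Fin m, x = Sum.inr (i, true) ∧ y = Sum.inr (i, false)) → G.Adj (f x) (f y) := by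
      rintro x y hne (⟨u, rfl⟩ | ⟨i, rfl, rfl⟩)
      · rcases y with u' | y
        · exact absurd rfl hne
        · exact hvf y
      · exact h.adj _ (he i)
    intro x y hxy
    rw [fan, SimpleGraph.fromRel_adj] at hxy
    obtain ⟨hne, h1 | h1⟩ := hxy
    · exact key x y hne h1
    · exact (key y x hne.symm h1).symm

/-- every independent set extracted from a maximal matching -/
lemma max_mat (G : SimpleGraph W) (S : Finset W) :
    ∃ M g, IsMat G S M g ∧ ∀ M' g', IsMat G S M' g' → M'.card ≤ M.card := by
  have hex : ∃ k, (∃ M g, IsMat G S M g ∧ M.card = k) ∧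
      ∀ k', (∃ M g, IsMat G S M g ∧ M.card = k') → k' ≤ k := by
    let P : ℕ → Prop := fun k => ∃ M g, IsMat G S M g ∧ M.card = k
    have h0 : P 0 := ⟨∅, id, ⟨by simp, by simp, by simp, by simp, by simp⟩, by simp⟩
    have hb : ∀ k, P k → k ≤ S.card := by
      rintro k ⟨M, g, h, rfl⟩
      exact card_le_card h.mem
    refine ⟨Nat.findGreatest P S.card, Nat.findGreatest_spec (Nat.zero_le _) h0, ?_⟩
    intro k' hk'
    exact Nat.le_findGreatest (hb k' hk') hk'
  obtain ⟨k, ⟨M, g, h, rfl⟩, hk⟩ := hex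
  exact ⟨M, g, h, fun M' g' h' => hk _ ⟨M', g', h', rfl⟩⟩

lemma IsMat.insert {S M : Finset W} {g : W → W} (h : IsMat G S M g) {x y : W}
    (hx : x ∈ S) (hy : y ∈ S) (hxM : x ∉ M) (hyM : y ∉ M) (hxg : x ∉ M.image g)
    (hyg : y ∉ M.image g) (hxy : G.Adj x y) :
    IsMat G S (insert x M) (Function.update g x y) := by
  have hne : ∀ z ∈ M, z ≠ x := fun z hz e => hxM (e ▸ hz)
  have hxg' : ∀ z ∈ M, g z ≠ x := fun z hz e => hxg (mem_image.2 ⟨z, hz, e⟩)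
  have hyg' : ∀ z ∈ M, g z ≠ y := fun z hz e => hyg (mem_image.2 ⟨z, hz, e⟩)
  constructor
  · intro z hz; rcases mem_insert.1 hz with rfl | hz
    · exact hx
    · exact h.mem z hz
  · intro z hz; rcases mem_insert.1 hz with rfl | hz
    · rwa [Function.update_self]
    · rw [Function.update_of_ne (hne z hz)]; exact h.gmem z hz
  · intro z hz; rcases mem_insert.1 hz with rfl | hz
    · rw [Function.update_self, mem_insert, not_or]; exact ⟨hxy.ne', hyM⟩
    · rw [Function.update_of_ne (hne z hz), mem_insert, not_or]
      exact ⟨hxg' z hz, h.gnot z hz⟩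
  · intro z hz; rcases mem_insert.1 hz with rfl | hz
    · rwa [Function.update_self]
    · rw [Function.update_of_ne (hne z hz)]; exact h.adj z hz
  · intro z hz w hw hzw
    rcases mem_insert.1 hz with hz1 | hz1 <;> rcases mem_insert.1 hw with hw1 | hw1
    · rw [hz1, hw1]
    · rw [hz1, Function.update_self, Function.update_of_ne (hne w hw1)] at hzw
      exact absurd hzw.symm (hyg' w hw1)
    · rw [hw1, Function.update_self, Function.update_of_ne (hne z hz1)] at hzw
      exact absurd hzw (hyg' z hz1)
    · rw [Function.update_of_ne (hne z hz1), Function.update_of_ne (hne w hw1)] at hzw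
      exact h.inj z hz1 w hw1 hzw

lemma IsMat.mono {S T M : Finset W} {g : W → W} (h : IsMat G S M g) (hST : S ⊆ T) :
    IsMat G T M g :=
  ⟨fun x hx => hST (h.mem x hx), fun x hx => hST (h.gmem x hx), h.gnot, h.adj, h.inj⟩

/-- unmatched vertices of a maximum matching are independent -/
lemma unmatched_ind {S M : Finset W} {g : W → W} (h : IsMat G S M g)
    (hmax : ∀ M' g', IsMat G S M' g' → M'.card ≤ M.card) :
    Ind G (S \ (M ∪ M.image g)) := by
  intro x hx y hy hxy
  simp only [mem_sdiff, mem_union, not_or] at hx hy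
  have := hmax _ _ (h.insert hx.1 hy.1 hx.2.1 hy.2.1 hx.2.2 hy.2.2 hxy)
  rw [card_insert_of_notMem hx.2.1] at this
  omega

lemma matched_card {S M : Finset W} {g : W → W} (h : IsMat G S M g) :
    (M ∪ M.image g).card = 2 * M.card := by
  rw [card_union_of_disjoint, card_image_of_injOn]
  · omega
  · intro x hx y hy hxy; exact h.inj x hx y hy hxy
  · rw [disjoint_left]
    intro x hx hx'
    obtain ⟨z, hz, rfl⟩ := mem_image.1 hx'
    exact h.gnot z hz hx

lemma matched_sub {S M : Finset W} {g : W → W} (h : IsMat G S M g) :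
    (M ∪ M.image g) ⊆ S := by
  intro x hx
  rcases mem_union.1 hx with hx | hx
  · exact h.mem x hx
  · obtain ⟨z, hz, rfl⟩ := mem_image.1 hx
    exact h.gmem z hz

/-- a large neighbourhood contains a large independent set -/
lemma ind_of_deg (hG : ¬ Contains G (fan m)) (hm : 1 ≤ m) (v : W) :
    ∃ K ⊆ nb G univ v, Ind G K ∧ (nb G univ v).card + 2 ≤ K.card + 2 * m := by
  obtain ⟨M, g, h, hmax⟩ := max_mat G (nb G univ v)
  refine ⟨_, sdiff_subset, unmatched_ind h hmax, ?_⟩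
  have h1 : M.card < m := by
    by_contra hc
    exact hG (fan_of_mat h (not_lt.1 hc))
  rw [card_sdiff_of_subset (matched_sub h), matched_card h]
  have := card_le_card (matched_sub h)
  rw [matched_card h] at this
  omega

/-- fan from a star whose leaves have private partners in the neighbourhood of the centre -/
lemma fan_of_sdr {v : W} {M : Finset W} (hM : M.card = m) (T : Finset W)
    (hMv : ∀ x ∈ M, G.Adj v x) (hd : Disjoint M T)
    (hT : ∀ x ∈ M, m ≤ (nb G (nb G T v) x).card) : Contains G (fan m) := by
  haveI : Nonempty W := ⟨v⟩
  obtain ⟨g, hg1, hg2⟩ := exists_sdr M (fun x => nb G (nb G T v) x) (by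
    intro i hi; rw [hM]; exact hT i hi)
  refine fan_of_mat (v := v) (M := M) (g := g) ⟨?_, ?_, ?_, ?_, hg1⟩ hM.ge
  · intro x hx; exact mem_nb.2 ⟨mem_univ _, hMv x hx⟩
  · intro x hx
    have := mem_nb.1 (hg2 x hx)
    exact nb_mono (subset_univ _) v this.1
  · intro x hx hx'
    have := (mem_nb.1 (mem_nb.1 (hg2 x hx)).1).1
    exact disjoint_left.1 hd hx' this
  · intro x hx
    exact (mem_nb.1 (hg2 x hx)).2

end fans
end RUF

namespace RUF
open Classical Finset

section embed
variable {V W : Type*} [Fintype V] [Fintype W] {G : SimpleGraph W} {U : SimpleGraph V}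

/-- extension of a partial embedding along an independent set of `G` -/
lemma ext_embed {K : Finset W} (hK : Ind G K) (S0 : Finset V) (ψ : V → W)
    (hinj : ∀ u ∈ S0, ∀ v ∈ S0, ψ u = ψ v → u = v)
    (hadj : ∀ u ∈ S0, ∀ v ∈ S0, U.Adj u v → Gᶜ.Adj (ψ u) (ψ v))
    (hb : ∀ u ∈ S0, ∀ v, v ∉ S0 → U.Adj u v → ψ u ∈ K)
    (F : Finset W) (hFK : F ⊆ K) (hFd : ∀ u ∈ S0, ψ u ∉ F)
    (hcard : Fintype.card V ≤ S0.card + F.card) : Contains Gᶜ U := by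
  rcases isEmpty_or_nonempty V with hV | ⟨⟨v0⟩⟩
  · exact ⟨fun v => hV.elim v, fun v => hV.elim v, fun v => hV.elim v⟩
  have hW : Nonempty W := ⟨ψ v0⟩
  obtain ⟨φ, hφ1, hφ2⟩ := exists_sdr S0ᶜ (fun _ => F) (by
    intro i hi
    rw [card_compl]; omega)
  have hc : ∀ v, v ∉ S0 → v ∈ S0ᶜ := fun v hv => mem_compl.2 hv
  refine ⟨fun v => if v ∈ S0 then ψ v else φ v, ?_, ?_⟩
  · intro u v huv
    by_cases hu : u ∈ S0 <;> by_cases hv : v ∈ S0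
    · simp only [hu, hv, if_true] at huv
      exact hinj u hu v hv huv
    · simp only [hu, hv, if_true, if_false] at huv
      exact absurd (huv ▸ hφ2 v (hc v hv)) (hFd u hu)
    · simp only [hu, hv, if_true, if_false] at huv
      exact absurd (huv ▸ hφ2 u (hc u hu)) (hFd v hv)
    · simp only [hu, hv, if_false] at huv
      exact hφ1 u (hc u hu) v (hc v hv) huv
  · intro u v huv
    by_cases hu : u ∈ S0 <;> by_cases hv : v ∈ S0
    · simp only [hu, hv, if_true]
      exact hadj u hu v hv huv
    · simp only [hu, hv, if_true, if_false]
      have h1 := hφ2 v (hc v hv)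
      exact hK.compl_adj (hb u hu v hv huv) (hFK h1) (fun e => hFd u hu (e ▸ h1))
    · simp only [hu, hv, if_true, if_false]
      have h1 := hφ2 u (hc u hu)
      exact hK.compl_adj (hFK h1) (hb v hv u hu huv.symm) (fun e => hFd v hv (e ▸ h1))
    · simp only [hu, hv, if_false]
      exact hK.compl_adj (hFK (hφ2 u (hc u hu))) (hFK (hφ2 v (hc v hv)))
        (fun e => huv.ne (hφ1 u (hc u hu) v (hc v hv) e))

/-- an independent set `P` of `U` is placed outside `K`, its neighbours inside `K` -/
lemma ext_indep {K : Finset W} (hK : Ind G K) (P Q : Finset V) (ψ : V → W)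
    (hPQ : Disjoint P Q) (hPn : ∀ p ∈ P, ∀ v, U.Adj p v → v ∈ Q)
    (hQK : ∀ q ∈ Q, ψ q ∈ K) (hPK : ∀ p ∈ P, ψ p ∉ K)
    (hPi : ∀ u ∈ P, ∀ v ∈ P, ψ u = ψ v → u = v)
    (hQi : ∀ u ∈ Q, ∀ v ∈ Q, ψ u = ψ v → u = v)
    (hadj : ∀ p ∈ P, ∀ q ∈ Q, U.Adj p q → Gᶜ.Adj (ψ p) (ψ q))
    (hcard : Fintype.card V ≤ K.card + P.card) : Contains Gᶜ U := by
  refine ext_embed hK (P ∪ Q) ψ ?_ ?_ ?_ (K \ Q.image ψ) sdiff_subset ?_ ?_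
  · intro u hu v hv huv
    rcases mem_union.1 hu with hu | hu <;> rcases mem_union.1 hv with hv | hv
    · exact hPi u hu v hv huv
    · exact absurd (huv ▸ hQK v hv) (hPK u hu)
    · exact absurd (huv ▸ hQK u hu) (hPK v hv)
    · exact hQi u hu v hv huv
  · intro u hu v hv huv
    rcases mem_union.1 hu with hu | hu
    · exact hadj u hu v (hPn u hu v huv) huv
    · rcases mem_union.1 hv with hv | hv
      · exact (hadj v hv u hu huv.symm).symm
      · exact hK.compl_adj (hQK u hu) (hQK v hv) (fun e => huv.ne (hQi u hu v hv e))
  · intro u hu v hv huv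
    rcases mem_union.1 hu with hu | hu
    · exact absurd (mem_union_right _ (hPn u hu v huv)) hv
    · exact hQK u hu
  · intro u hu
    rcases mem_union.1 hu with hu | hu
    · intro h; exact hPK u hu (mem_sdiff.1 h).1
    · intro h; exact (mem_sdiff.1 h).2 (mem_image_of_mem _ hu)
  · have hs : Q.image ψ ⊆ K := by
      intro x hx; obtain ⟨q, hq, rfl⟩ := mem_image.1 hx; exact hQK q hq
    rw [card_union_of_disjoint hPQ, card_sdiff_of_subset hs,
      card_image_of_injOn (fun u hu v hv h => hQi u hu v hv h)]
    have := card_le_card hs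
    rw [card_image_of_injOn (fun u hu v hv h => hQi u hu v hv h)] at this
    omega

lemma ext_big {K : Finset W} (hK : Ind G K) (hc : Fintype.card V ≤ K.card) :
    Contains Gᶜ U := by
  rcases isEmpty_or_nonempty V with hV | ⟨⟨v0⟩⟩
  · exact ⟨fun v => hV.elim v, fun v => hV.elim v, fun v => hV.elim v⟩
  have : 0 < K.card := lt_of_lt_of_le (Fintype.card_pos_iff.2 ⟨v0⟩) hc
  obtain ⟨x, hx⟩ := card_pos.1 this
  exact ext_indep hK ∅ ∅ (fun _ => x) (by simp) (by simp) (by simp) (by simp) (by simp) (by simp)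
    (by simp) (by simpa using hc)

end embed

section rep
variable {V : Type*} [Fintype V] {U : SimpleGraph V}

lemma bfs (hU : U.Connected) (A : Finset V) (hA : A.Nonempty) :
    ∃ (h : V → ℕ) (p : V → V), (∀ v ∈ A, h v = 0) ∧
      (∀ v, v ∉ A → U.Adj v (p v) ∧ h (p v) + 1 = h v) := by
  let h : V → ℕ := fun v => A.inf' hA (fun a => U.dist v a)
  have hle : ∀ v, ∀ a ∈ A, h v ≤ U.dist v a := fun v a ha => inf'_le _ ha
  have hex : ∀ v, ∃ a ∈ A, h v = U.dist v a := fun v => exists_mem_eq_inf' hA _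
  have key : ∀ v, v ∉ A → ∃ w, U.Adj v w ∧ h w + 1 = h v := by
    intro v hv
    obtain ⟨a, ha, hva⟩ := hex v
    have hne : v ≠ a := fun e => hv (e ▸ ha)
    obtain ⟨q, hq⟩ := hU.exists_walk_length_eq_dist v a
    cases q with
    | nil => exact absurd rfl hne
    | @cons _ w _ hadj q =>
      refine ⟨w, hadj, ?_⟩
      rw [SimpleGraph.Walk.length_cons] at hq
      have h1 := SimpleGraph.dist_le q
      have h2 := hle w a ha
      obtain ⟨b, hb, hwb⟩ := hex w
      have h3 := hle v b hb
      have h4 : U.dist v b ≤ U.dist v w + U.dist w b := hU.dist_triangle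
      have h5 : U.dist v w = 1 := SimpleGraph.dist_eq_one_iff_adj.2 hadj
      omega
  choose! p hp using key
  refine ⟨h, p, ?_, hp⟩
  intro v hv
  have := hle v v hv
  rw [SimpleGraph.dist_self] at this
  omega

lemma edges_card {n : ℕ} (hE : U.edgeSet.ncard = n) : U.edgeFinset.card = n := by
  rw [← hE, ← SimpleGraph.coe_edgeFinset, Set.ncard_coe_finset]

/-- the parent edges -/
lemma parent_edges {A : Finset V} {h : V → ℕ} {p : V → V}
    (hp : ∀ v, v ∉ A → U.Adj v (p v) ∧ h (p v) + 1 = h v) :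
    (Aᶜ.image (fun v => s(v, p v))) ⊆ U.edgeFinset ∧
    (Aᶜ.image (fun v => s(v, p v))).card = Fintype.card V - A.card := by
  constructor
  · intro e he
    obtain ⟨v, hv, rfl⟩ := mem_image.1 he
    rw [SimpleGraph.mem_edgeFinset, SimpleGraph.mem_edgeSet]
    exact (hp v (mem_compl.1 hv)).1
  · rw [card_image_of_injOn, card_compl]
    intro v hv w hw hvw
    have hv' := (hp v (by simpa using hv)).2
    have hw' := (hp w (by simpa using hw)).2
    rcases Sym2.eq_iff.1 hvw with ⟨h1, _⟩ | ⟨h1, h2⟩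
    · exact h1
    · rw [← h1] at hw'
      rw [h2] at hv'
      omega

lemma rep_tree {n : ℕ} (hU : U.Connected) (hn : Fintype.card V = n)
    (hE : U.edgeSet.ncard = n) (r : V) :
    ∃ (h : V → ℕ) (p : V → V) (a b : V), h r = 0 ∧
      (∀ v, v ≠ r → U.Adj v (p v) ∧ h (p v) + 1 = h v) ∧
      (∀ x y, U.Adj x y → (x ≠ r ∧ p x = y) ∨ (y ≠ r ∧ p y = x) ∨ s(x, y) = s(a, b)) := by
  obtain ⟨h, p, h0, hp⟩ := bfs hU {r} (singleton_nonempty r)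
  obtain ⟨h1, h2⟩ := parent_edges hp
  have hn1 : 1 ≤ n := by rw [← hn]; exact Fintype.card_pos_iff.2 ⟨r⟩
  have h3 : (U.edgeFinset \ (({r} : Finset V)ᶜ.image (fun v => s(v, p v)))).card = 1 := by
    rw [card_sdiff_of_subset h1, h2, edges_card hE, hn, card_singleton]; omega
  obtain ⟨e, he⟩ := card_eq_one.1 h3
  induction e using Sym2.ind with
  | _ a b =>
    refine ⟨h, p, a, b, h0 r (by simp), fun v hv => hp v (by simpa using hv), ?_⟩
    intro x y hxy
    by_cases hm : s(x, y) ∈ (({r} : Finset V)ᶜ.image (fun v => s(v, p v)))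
    · obtain ⟨v, hv, hve⟩ := mem_image.1 hm
      have hv' : v ≠ r := by simpa using hv
      rcases Sym2.eq_iff.1 hve with ⟨e1, e2⟩ | ⟨e1, e2⟩
      · exact Or.inl ⟨e1 ▸ hv', e1 ▸ e2⟩
      · exact Or.inr (Or.inl ⟨e1 ▸ hv', e1 ▸ e2⟩)
    · right; right
      have : s(x, y) ∈ U.edgeFinset \ (({r} : Finset V)ᶜ.image (fun v => s(v, p v))) := by
        rw [mem_sdiff]; exact ⟨by simpa using hxy, hm⟩
      rw [he, mem_singleton] at this
      exact this

lemma rep_cycle {n : ℕ} (hU : U.Connected) (hn : Fintype.card V = n)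
    (hE : U.edgeSet.ncard = n) :
    ∃ (k : ℕ) (c : ℕ → V) (h : V → ℕ) (p : V → V), 3 ≤ k ∧
      (∀ i < k, ∀ j < k, c i = c j → i = j) ∧
      (∀ v, v ∉ (range k).image c → U.Adj v (p v) ∧ h (p v) + 1 = h v) ∧
      (∀ x y, U.Adj x y → (x ∉ (range k).image c ∧ p x = y) ∨ (y ∉ (range k).image c ∧ p y = x)
        ∨ ∃ i < k, s(x, y) = s(c i, c ((i + 1) % k))) := by
  have hac : ¬ U.IsAcyclic := by
    intro hac
    have := (SimpleGraph.IsTree.mk hU hac).card_edgeFinset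
    rw [edges_card hE, hn] at this
    omega
  unfold SimpleGraph.IsAcyclic at hac
  push Not at hac
  obtain ⟨v, q, hq⟩ := hac
  set k := q.length with hk
  have hk3 : 3 ≤ k := hq.isCircuit.three_le_length
  have hci : ∀ i < k, ∀ j < k, q.getVert i = q.getVert j → i = j := by
    intro i hi j hj hij
    exact hq.getVert_injOn' (by simp; omega) (by simp; omega) hij
  have hlast : ∀ i < k, q.getVert ((i + 1) % k) = q.getVert (i + 1) := by
    intro i hi
    rcases Nat.lt_or_ge (i + 1) k with h | h
    · rw [Nat.mod_eq_of_lt h]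
    · have : i + 1 = k := by omega
      rw [this, Nat.mod_self, SimpleGraph.Walk.getVert_zero, hk, SimpleGraph.Walk.getVert_length]
  set A : Finset V := (range k).image q.getVert with hA
  obtain ⟨h, p, h0, hp⟩ := bfs hU A ⟨q.getVert 0, mem_image_of_mem _ (mem_range.2 (by omega))⟩
  obtain ⟨h1, h2⟩ := parent_edges hp
  have hAc : A.card = k := by
    rw [hA, card_image_of_injOn, card_range]
    intro i hi j hj hij
    exact hci i (by simpa using hi) j (by simpa using hj) hij
  have hAV : A.card ≤ Fintype.card V := card_le_univ A
  set CE : Finset (Sym2 V) := (range k).image (fun i => s(q.getVert i, q.getVert ((i + 1) % k)))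
    with hCE
  have hCEs : CE ⊆ U.edgeFinset := by
    intro e he
    obtain ⟨i, hi, rfl⟩ := mem_image.1 he
    rw [SimpleGraph.mem_edgeFinset, SimpleGraph.mem_edgeSet, hlast i (mem_range.1 hi)]
    exact q.adj_getVert_succ (mem_range.1 hi)
  have hCEc : CE.card = k := by
    rw [hCE, card_image_of_injOn, card_range]
    intro i hi j hj hij
    have hi' : i < k := by simpa using hi
    have hj' : j < k := by simpa using hj
    rcases Sym2.eq_iff.1 hij with ⟨e1, _⟩ | ⟨e1, e2⟩
    · exact hci i hi' j hj' e1
    · have e3 := hci _ hi' _ (Nat.mod_lt _ (by omega)) e1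
      have e4 := hci _ (Nat.mod_lt _ (by omega)) _ hj' e2
      exfalso
      rcases Nat.lt_or_ge (i + 1) k with h | h <;> rcases Nat.lt_or_ge (j + 1) k with h' | h'
      · rw [Nat.mod_eq_of_lt h] at e4; rw [Nat.mod_eq_of_lt h'] at e3; omega
      · have : j + 1 = k := by omega
        rw [this, Nat.mod_self] at e3
        rw [Nat.mod_eq_of_lt h] at e4; omega
      · have : i + 1 = k := by omega
        rw [this, Nat.mod_self] at e4
        rw [Nat.mod_eq_of_lt h'] at e3; omega
      · have : i + 1 = k := by omega
        rw [this, Nat.mod_self] at e4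
        omega
  have hdisj : Disjoint CE (Aᶜ.image (fun v => s(v, p v))) := by
    rw [disjoint_left]
    intro e he he'
    obtain ⟨i, hi, rfl⟩ := mem_image.1 he
    obtain ⟨v, hv, hve⟩ := mem_image.1 he'
    have hm : v ∈ s(q.getVert i, q.getVert ((i + 1) % k)) := by
      rw [← hve]; simp
    rw [Sym2.mem_iff] at hm
    refine mem_compl.1 hv ?_
    rcases hm with rfl | rfl
    · exact mem_image_of_mem _ hi
    · exact mem_image_of_mem _ (mem_range.2 (Nat.mod_lt _ (by omega)))
  have hall : CE ∪ (Aᶜ.image (fun v => s(v, p v))) = U.edgeFinset := by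
    refine eq_of_subset_of_card_le (union_subset hCEs h1) ?_
    rw [card_union_of_disjoint hdisj, h2, hCEc, edges_card hE, hn, hAc]
    omega
  refine ⟨k, q.getVert, h, p, hk3, hci, hp, ?_⟩
  intro x y hxy
  have : s(x, y) ∈ U.edgeFinset := by simpa using hxy
  rw [← hall, mem_union] at this
  rcases this with hm | hm
  · obtain ⟨i, hi, he⟩ := mem_image.1 hm
    exact Or.inr (Or.inr ⟨i, mem_range.1 hi, he.symm⟩)
  · obtain ⟨v, hv, hve⟩ := mem_image.1 hm
    have hv' : v ∉ A := mem_compl.1 hv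
    rcases Sym2.eq_iff.1 hve with ⟨e1, e2⟩ | ⟨e1, e2⟩
    · exact Or.inl ⟨e1 ▸ hv', e1 ▸ e2⟩
    · exact Or.inr (Or.inl ⟨e1 ▸ hv', e1 ▸ e2⟩)

end rep
end RUF

namespace RUF
open Classical Finset

/-- a cycle of length `q` in `H` through the vertices `c 0, …, c (q-1)` of `S` -/
structure Cyc {W : Type*} (H : SimpleGraph W) (S : Finset W) (q : ℕ) (c : ℕ → W) : Prop where
  mem : ∀ i < q, c i ∈ S
  inj : ∀ i < q, ∀ j < q, c i = c j → i = j
  adj : ∀ i, i + 1 < q → H.Adj (c i) (c (i + 1))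
  close : H.Adj (c (q - 1)) (c 0)

section cyc
variable {W : Type*} [Fintype W] {G : SimpleGraph W} {m : ℕ}

lemma fan_of_clique {z : W} {D : Finset W} (hD : 2 * m ≤ D.card)
    (hz : ∀ x ∈ D, G.Adj z x) (hc : ∀ x ∈ D, ∀ y ∈ D, x ≠ y → G.Adj x y) :
    Contains G (fan m) := by
  obtain ⟨M, hM, hMc⟩ := exists_subset_card_eq (show m ≤ D.card by omega)
  refine fan_of_sdr hMc (D \ M) (fun x hx => hz x (hM hx)) disjoint_sdiff ?_
  intro x hx
  have : nb G (nb G (D \ M) z) x = D \ M := by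
    ext y
    simp only [mem_nb, mem_sdiff]
    constructor
    · tauto
    · rintro ⟨h1, h2⟩
      refine ⟨⟨⟨h1, h2⟩, hz y h1⟩, hc x (hM hx) y h1 ?_⟩
      rintro rfl; exact h2 hx
  rw [this, card_sdiff_of_subset hM]; omega

lemma cyc_image_card {H : SimpleGraph W} {S : Finset W} {q : ℕ} {c : ℕ → W} (h : Cyc H S q c) :
    ((range q).image c).card = q := by
  rw [card_image_of_injOn, card_range]
  intro i hi j hj hij
  exact h.inj i (by simpa using hi) j (by simpa using hj) hij

lemma cyc_insert (hG : ¬ Contains G (fan m)) {S : Finset W} {q : ℕ} {c : ℕ → W}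
    (h : Cyc Gᶜ S q c) {z : W} (hzS : z ∈ S) (hz : z ∉ (range q).image c)
    (hd : 2 * m + 1 ≤ (nb Gᶜ ((range q).image c) z).card) :
    ∃ c', Cyc Gᶜ S (q + 1) c' := by
  have hz' : ∀ i < q, c i ≠ z := fun i hi e => hz (mem_image.2 ⟨i, mem_range.2 hi, e⟩)
  set I := (range (q - 1)).filter (fun i => Gᶜ.Adj z (c i)) with hI
  have hIm : ∀ i, i ∈ I ↔ i + 1 < q ∧ Gᶜ.Adj z (c i) := by
    intro i; rw [hI, mem_filter, mem_range]
    constructor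
    · rintro ⟨a, b⟩; exact ⟨by omega, b⟩
    · rintro ⟨a, b⟩; exact ⟨by omega, b⟩
  have hIc : 2 * m ≤ I.card := by
    have hs : nb Gᶜ ((range q).image c) z ⊆ insert (c (q - 1)) (I.image c) := by
      intro y hy
      obtain ⟨hy1, hy2⟩ := mem_nb.1 hy
      obtain ⟨i, hi, rfl⟩ := mem_image.1 hy1
      rw [mem_range] at hi
      rw [mem_insert]
      by_cases hq : i = q - 1
      · left; rw [hq]
      · right; exact mem_image_of_mem _ ((hIm i).2 ⟨by omega, hy2⟩)
    have h1 := card_le_card hs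
    have h2 := card_insert_le (c (q - 1)) (I.image c)
    have h3 : (I.image c).card ≤ I.card := card_image_le
    omega
  by_cases hA : ∃ i ∈ I, Gᶜ.Adj z (c (i + 1))
  · obtain ⟨i, hi, hia⟩ := hA
    obtain ⟨hi1, hi2⟩ := (hIm i).1 hi
    refine ⟨fun l => if l ≤ i then c l else if l = i + 1 then z else c (l - 1), ?_, ?_, ?_, ?_⟩
    · intro l hl
      try dsimp only
      split_ifs
      · exact h.mem _ (by omega)
      · exact hzS
      · exact h.mem _ (by omega)
    · intro a ha b hb hab
      try dsimp only at hab
      split_ifs at hab <;> first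
        | omega
        | (have := h.inj _ (by omega) _ (by omega) hab; omega)
        | exact absurd hab (hz' _ (by omega))
        | exact absurd hab.symm (hz' _ (by omega))
    · intro l hl
      try dsimp only
      rcases lt_trichotomy l i with hl1 | hl1 | hl1
      · rw [if_pos (by omega), if_pos (by omega)]
        exact h.adj l (by omega)
      · subst hl1
        rw [if_pos (by omega), if_neg (by omega), if_pos rfl]
        exact hi2.symm
      · by_cases hl2 : l = i + 1
        · rw [if_neg (by omega), if_pos hl2, if_neg (by omega), if_neg (by omega), hl2]
          exact hia
        · rw [if_neg (by omega), if_neg hl2, if_neg (by omega), if_neg (by omega)]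
          have := h.adj (l - 1) (by omega)
          rwa [show l - 1 + 1 = l + 1 - 1 by omega] at this
    · try dsimp only
      rw [if_neg (by omega), if_neg (by omega), if_pos (by omega)]
      exact h.close
  by_cases hB : ∃ i ∈ I, ∃ j ∈ I, i < j ∧ Gᶜ.Adj (c (i + 1)) (c (j + 1))
  · obtain ⟨i, hi, j, hj, hij, hadj⟩ := hB
    obtain ⟨hi1, hi2⟩ := (hIm i).1 hi
    obtain ⟨hj1, hj2⟩ := (hIm j).1 hj
    refine ⟨fun l => if l ≤ i then c l else if l = i + 1 then z else
      if l ≤ j + 1 then c (j + i + 2 - l) else c (l - 1), ?_, ?_, ?_, ?_⟩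
    · intro l hl
      try dsimp only
      split_ifs
      · exact h.mem _ (by omega)
      · exact hzS
      · exact h.mem _ (by omega)
      · exact h.mem _ (by omega)
    · intro a ha b hb hab
      try dsimp only at hab
      split_ifs at hab <;> first
        | omega
        | (have := h.inj _ (by omega) _ (by omega) hab; omega)
        | exact absurd hab (hz' _ (by omega))
        | exact absurd hab.symm (hz' _ (by omega))
    · intro l hl
      try dsimp only
      rcases lt_trichotomy l i with hl1 | hl1 | hl1
      · rw [if_pos (by omega), if_pos (by omega)]
        exact h.adj l (by omega)
      · subst hl1
        rw [if_pos (by omega), if_neg (by omega), if_pos rfl]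
        exact hi2.symm
      · by_cases hl2 : l = i + 1
        · rw [if_neg (by omega), if_pos hl2, if_neg (by omega), if_neg (by omega),
            if_pos (by omega), hl2, show j + i + 2 - (i + 1 + 1) = j by omega]
          exact hj2
        · rw [if_neg (by omega), if_neg hl2]
          rcases lt_trichotomy l (j + 1) with hl3 | hl3 | hl3
          · rw [if_pos (by omega), if_neg (by omega), if_neg (by omega), if_pos (by omega)]
            have := h.adj (j + i + 2 - (l + 1)) (by omega)
            rw [show j + i + 2 - (l + 1) + 1 = j + i + 2 - l by omega] at this
            exact this.symm
          · rw [if_pos (by omega), if_neg (by omega), if_neg (by omega), if_neg (by omega), hl3,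
              show j + i + 2 - (j + 1) = i + 1 by omega, show j + 1 + 1 - 1 = j + 1 by omega]
            exact hadj
          · rw [if_neg (by omega), if_neg (by omega), if_neg (by omega), if_neg (by omega)]
            have := h.adj (l - 1) (by omega)
            rwa [show l - 1 + 1 = l + 1 - 1 by omega] at this
    · try dsimp only
      rw [if_neg (by omega), if_neg (by omega), if_neg (by omega), if_pos (by omega)]
      exact h.close
  exfalso
  push Not at hA hB
  apply hG
  refine fan_of_clique (z := z) (D := I.image (fun i => c (i + 1))) ?_ ?_ ?_
  · rw [card_image_of_injOn]
    · exact hIc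
    · intro a ha b hb hab
      have := h.inj _ ((hIm a).1 ha).1 _ ((hIm b).1 hb).1 hab
      omega
  · intro x hx
    obtain ⟨i, hi, rfl⟩ := mem_image.1 hx
    have h1 := hA i hi
    have h2 := hz' _ ((hIm i).1 hi).1
    rw [SimpleGraph.compl_adj] at h1
    by_contra h3
    exact h1 ⟨h2.symm, h3⟩
  · intro x hx y hy hxy
    obtain ⟨i, hi, rfl⟩ := mem_image.1 hx
    obtain ⟨j, hj, rfl⟩ := mem_image.1 hy
    by_contra h3
    rcases lt_trichotomy i j with hl | hl | hl
    · exact hB i hi j hj hl (by rw [SimpleGraph.compl_adj]; exact ⟨hxy, h3⟩)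
    · exact hxy (by rw [hl])
    · exact hB j hj i hi hl (by
        rw [SimpleGraph.compl_adj]; exact ⟨hxy.symm, fun e => h3 e.symm⟩)

/-- greedy cycles in a sparse set -/
lemma greedy_cyc {O : Finset W} {D J : ℕ} (hD : ∀ z ∈ O, (nb G O z).card ≤ D)
    (hO : J + 2 * D < O.card) :
    ∀ j, 1 ≤ j → j ≤ J → ∃ c : ℕ → W, (∀ i < j, c i ∈ O) ∧ (∀ i < j, ∀ l < j, c i = c l → i = l) ∧
      (∀ i, i + 1 < j → Gᶜ.Adj (c i) (c (i + 1))) ∧ (∀ i, 1 ≤ i → i < j → Gᶜ.Adj (c i) (c 0)) := by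
  intro j hj
  induction j, hj using Nat.le_induction with
  | base =>
    intro _
    obtain ⟨x, hx⟩ := card_pos.1 (show 0 < O.card by omega)
    exact ⟨fun _ => x, fun _ _ => hx, fun i hi l hl _ => by omega, fun i hi => by omega,
      fun i hi hi' => by omega⟩
  | succ j hj ih =>
    intro hjJ
    obtain ⟨c, h1, h2, h3, h4⟩ := ih (by omega)
    have hcard : ((range j).image c ∪ (nb G O (c (j - 1)) ∪ nb G O (c 0))).card < O.card := by
      have a1 := card_union_le ((range j).image c) (nb G O (c (j - 1)) ∪ nb G O (c 0))
      have a2 := card_union_le (nb G O (c (j - 1))) (nb G O (c 0))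
      have a3 : ((range j).image c).card ≤ (range j).card := card_image_le
      rw [card_range] at a3
      have a4 := hD _ (h1 (j - 1) (by omega))
      have a5 := hD _ (h1 0 (by omega))
      omega
    obtain ⟨x, hx, hx'⟩ := exists_mem_notMem_of_card_lt_card hcard
    simp only [mem_union, not_or, mem_nb, not_and] at hx'
    obtain ⟨x1, x2, x3⟩ := hx'
    have hxc : ∀ i < j, c i ≠ x := fun i hi e => x1 (mem_image.2 ⟨i, mem_range.2 hi, e⟩)
    refine ⟨fun i => if i < j then c i else x, ?_, ?_, ?_, ?_⟩
    · intro i hi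
      dsimp only
      split_ifs with hij
      · exact h1 i hij
      · exact hx
    · intro a ha b hb hab
      dsimp only at hab
      split_ifs at hab with q1 q2 q2
      · exact h2 _ q1 _ q2 hab
      · exact absurd hab (hxc _ q1)
      · exact absurd hab.symm (hxc _ q2)
      · omega
    · intro i hi
      dsimp only
      rw [if_pos (by omega)]
      split_ifs with q
      · exact h3 i q
      · have : i = j - 1 := by omega
        rw [this, SimpleGraph.compl_adj]
        exact ⟨hxc _ (by omega), x2 hx⟩
    · intro i hi hij
      dsimp only
      rw [if_pos (show 0 < j by omega)]
      split_ifs with q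
      · exact h4 i hi q
      · refine SimpleGraph.Adj.symm ?_
        rw [SimpleGraph.compl_adj]
        exact ⟨hxc _ (by omega), x3 hx⟩

lemma sparse_cyc (hG : ¬ Contains G (fan m)) (hm : 1 ≤ m) {O : Finset W}
    (hD : ∀ z ∈ O, (nb G O z).card ≤ 4 * m - 2) (hO : 17 * m < O.card) :
    ∀ j, 3 ≤ j → j ≤ O.card → ∃ c, Cyc Gᶜ O j c := by
  intro j hj
  induction j, hj using Nat.le_induction with
  | base =>
    intro _
    obtain ⟨c, h1, h2, h3, h4⟩ := greedy_cyc hD (J := 6 * m) (by omega) 3 (by omega) (by omega)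
    exact ⟨c, h1, h2, h3, h4 _ (by omega) (by omega)⟩
  | succ j hj ih =>
    intro hjO
    by_cases hj6 : j + 1 ≤ 6 * m
    · obtain ⟨c, h1, h2, h3, h4⟩ := greedy_cyc hD (J := 6 * m) (by omega) (j + 1) (by omega) hj6
      exact ⟨c, h1, h2, h3, h4 _ (by omega) (by omega)⟩
    obtain ⟨c, hc⟩ := ih (by omega)
    have hcc := cyc_image_card hc
    obtain ⟨z, hz, hz'⟩ := exists_mem_notMem_of_card_lt_card
      (show ((range j).image c).card < O.card by omega)
    refine cyc_insert hG hc hz hz' ?_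
    have h1 := nb_compl_notmem (G := G) hz'
    have hsub : (range j).image c ⊆ O := by
      intro x hx; obtain ⟨i, hi, rfl⟩ := mem_image.1 hx; exact hc.mem i (mem_range.1 hi)
    have h2 := nb_card_mono (G := G) hsub z
    have h3 := hD z hz
    omega

lemma clique_cyc {K : Finset W} (hK : Ind G K) {k : ℕ} (hk : 3 ≤ k) (hc : k ≤ K.card) :
    ∃ c, Cyc Gᶜ univ k c := by
  obtain ⟨x, hx⟩ := card_pos.1 (show 0 < K.card by omega)
  have : Nonempty W := ⟨x⟩
  obtain ⟨c, h1, h2⟩ := exists_sdr (range k) (fun _ => K) (by intro i _; rw [card_range]; exact hc)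
  refine ⟨c, fun _ _ => mem_univ _, ?_, ?_, ?_⟩
  · intro i hi j hj hij
    exact h1 i (mem_range.2 hi) j (mem_range.2 hj) hij
  · intro i hi
    refine hK.compl_adj (h2 _ (mem_range.2 (by omega))) (h2 _ (mem_range.2 hi)) ?_
    intro e
    have := h1 _ (mem_range.2 (by omega)) _ (mem_range.2 hi) e
    omega
  · refine hK.compl_adj (h2 _ (mem_range.2 (by omega))) (h2 _ (mem_range.2 (by omega))) ?_
    intro e
    have := h1 _ (mem_range.2 (by omega)) _ (mem_range.2 (by omega)) e
    omega

lemma Cyc.mono {H : SimpleGraph W} {S T : Finset W} {q : ℕ} {c : ℕ → W} (h : Cyc H S q c)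
    (hST : S ⊆ T) : Cyc H T q c :=
  ⟨fun i hi => hST (h.mem i hi), h.inj, h.adj, h.close⟩

lemma all_cyc (hG : ¬ Contains G (fan m)) (hm : 1 ≤ m) {n : ℕ} (hn : 17 * m < n)
    (hW : Fintype.card W = 2 * n - 1) :
    ∀ k, 3 ≤ k → k ≤ n → ∃ c, Cyc Gᶜ univ k c := by
  have step : ∀ k, 3 ≤ k → (∃ v, k + 2 * m ≤ (nb G univ v).card + 2) → ∃ c, Cyc Gᶜ univ k c := by
    rintro k hk ⟨v, hv⟩
    obtain ⟨K, _, hK, hKc⟩ := ind_of_deg hG hm v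
    exact clique_cyc hK hk (by omega)
  intro k hk
  induction k, hk using Nat.le_induction with
  | base =>
    intro _
    by_cases hex : ∃ v, 3 + 2 * m ≤ (nb G univ v).card + 2
    · exact step 3 le_rfl hex
    push Not at hex
    refine sparse_cyc hG hm (O := univ) ?_ ?_ 3 le_rfl ?_
    · intro z _
      have := hex z
      omega
    · rw [card_univ]; omega
    · rw [card_univ]; omega
  | succ k hk ih =>
    intro hkn
    by_cases hex : ∃ v, k + 1 + 2 * m ≤ (nb G univ v).card + 2
    · exact step (k + 1) (by omega) hex
    push Not at hex
    obtain ⟨c, hc⟩ := ih (by omega)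
    have hcc := cyc_image_card hc
    set C := (range k).image c with hC
    by_cases hz : ∃ z, z ∉ C ∧ 2 * m + 1 ≤ (nb Gᶜ C z).card
    · obtain ⟨z, hz1, hz2⟩ := hz
      exact cyc_insert hG hc (mem_univ z) hz1 hz2
    push Not at hz
    have hOc : (Cᶜ).card = 2 * n - 1 - k := by rw [card_compl, hW, hcc]
    obtain ⟨c', hc'⟩ := sparse_cyc hG hm (O := Cᶜ) (by
      intro z hz1
      have hz2 := mem_compl.1 hz1
      have h1 := nb_compl_notmem (G := G) hz2
      have h2 := hz z hz2
      have h3 := nb_union_card (G := G) (disjoint_compl_right (a := C)) z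
      have h4 := nb_card_mono (G := G) (subset_univ (C ∪ Cᶜ)) z
      have h5 := hex z
      omega) (by omega) (k + 1) (by omega) (by omega)
    exact ⟨c', hc'.mono (subset_univ _)⟩

variable {V : Type*} [Fintype V] {U : SimpleGraph V}

/-- Case B: all degrees in the complement are at least `n - 1` -/
lemma caseB (hG : ¬ Contains G (fan m)) (hm : 1 ≤ m) {n : ℕ} (hn : 17 * m < n)
    (hW : Fintype.card W = 2 * n - 1) (hU : U.Connected) (hV : Fintype.card V = n)
    (hE : U.edgeSet.ncard = n) (hdeg : ∀ v, n - 1 ≤ (nb Gᶜ univ v).card) : Contains Gᶜ U := by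
  obtain ⟨k, c, h, p, hk3, hci, hp, hadj⟩ := rep_cycle hU hV hE
  set A := (range k).image c with hA
  have hAc : A.card = k := by
    rw [hA, card_image_of_injOn, card_range]
    intro i hi j hj hij
    exact hci i (by simpa using hi) j (by simpa using hj) hij
  have hkn : k ≤ n := by rw [← hV, ← hAc]; exact card_le_univ A
  obtain ⟨d, hd⟩ := all_cyc hG hm hn hW k hk3 hkn
  have hdm : ∀ i < k, Gᶜ.Adj (d i) (d ((i + 1) % k)) := by
    intro i hi
    rcases Nat.lt_or_ge (i + 1) k with h' | h'
    · rw [Nat.mod_eq_of_lt h']; exact hd.adj i h'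
    · have e : i + 1 = k := by omega
      rw [e, Nat.mod_self]
      have := hd.close
      rwa [show k - 1 = i by omega] at this
  have key : ∀ N, ∀ S : Finset V, A ⊆ S → S.card = k + N → (∀ v ∈ S, v ∉ A → p v ∈ S) →
      ∃ f : V → W, (∀ u ∈ S, ∀ v ∈ S, f u = f v → u = v) ∧
        (∀ u ∈ S, ∀ v ∈ S, U.Adj u v → Gᶜ.Adj (f u) (f v)) := by
    intro N
    induction N with
    | zero =>
      intro S hAS hSc _
      have hSA : A = S := eq_of_subset_of_card_le hAS (by omega)
      subst hSA
      have hidx : ∀ v, ∃ i, v ∈ A → i < k ∧ c i = v := by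
        intro v
        by_cases hv : v ∈ A
        · obtain ⟨i, hi, e⟩ := mem_image.1 hv
          exact ⟨i, fun _ => ⟨mem_range.1 hi, e⟩⟩
        · exact ⟨0, fun h => absurd h hv⟩
      choose idx hidx using hidx
      have hidx2 : ∀ i < k, idx (c i) = i := by
        intro i hi
        have := hidx (c i) (mem_image_of_mem _ (mem_range.2 hi))
        exact hci _ this.1 _ hi this.2
      refine ⟨fun v => d (idx v), ?_, ?_⟩
      · intro u hu v hv huv
        have := hd.inj _ (hidx u hu).1 _ (hidx v hv).1 huv
        rw [← (hidx u hu).2, ← (hidx v hv).2, this]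
      · intro u hu v hv huv
        rcases hadj u v huv with ⟨h1, _⟩ | ⟨h1, _⟩ | ⟨i, hi, he⟩
        · exact absurd hu h1
        · exact absurd hv h1
        · have hi' : (i + 1) % k < k := Nat.mod_lt _ (by omega)
          rcases Sym2.eq_iff.1 he with ⟨e1, e2⟩ | ⟨e1, e2⟩
          · rw [e1, e2]; dsimp only; rw [hidx2 _ hi, hidx2 _ hi']; exact hdm i hi
          · rw [e1, e2]; dsimp only; rw [hidx2 _ hi, hidx2 _ hi']; exact (hdm i hi).symm
    | succ N ih =>
      intro S hAS hSc hcl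
      have hne : (S \ A).Nonempty := by
        rw [← card_pos, card_sdiff_of_subset hAS]; omega
      obtain ⟨v, hv, hmax⟩ := exists_max_image (S \ A) h hne
      obtain ⟨hvS, hvA⟩ := mem_sdiff.1 hv
      have hpv := hp v hvA
      obtain ⟨f, hf1, hf2⟩ := ih (S.erase v)
        (fun a ha => mem_erase.2 ⟨fun e => hvA (e ▸ ha), hAS ha⟩)
        (by rw [card_erase_of_mem hvS]; omega) (by
          intro w hw hwA
          obtain ⟨hw1, hw2⟩ := mem_erase.1 hw
          refine mem_erase.2 ⟨?_, hcl w hw2 hwA⟩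
          intro e
          have h1 := hmax w (mem_sdiff.2 ⟨hw2, hwA⟩)
          have h2 := (hp w hwA).2
          rw [e] at h2
          omega)
      have hpS : p v ∈ S.erase v := mem_erase.2 ⟨hpv.1.ne', hcl v hvS hvA⟩
      have hcard : (((S.erase v).erase (p v)).image f).card < (nb Gᶜ univ (f (p v))).card := by
        have h1 : (((S.erase v).erase (p v)).image f).card ≤ _ := card_image_le
        rw [card_erase_of_mem hpS, card_erase_of_mem hvS] at h1
        have h2 := hdeg (f (p v))
        have h3 : S.card ≤ n := by rw [← hV]; exact card_le_univ S
        omega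
      obtain ⟨x, hx, hx'⟩ := exists_mem_notMem_of_card_lt_card hcard
      have hxa : Gᶜ.Adj (f (p v)) x := (mem_nb.1 hx).2
      have hxf : ∀ u ∈ S, u ≠ v → f u ≠ x := by
        intro u hu huv e
        by_cases hup : u = p v
        · rw [← e, hup] at hxa; exact hxa.ne rfl
        · exact hx' (mem_image.2 ⟨u, mem_erase.2 ⟨hup, mem_erase.2 ⟨huv, hu⟩⟩, e⟩)
      have hvn : ∀ y ∈ S, U.Adj v y → y = p v := by
        intro y hy hvy
        rcases hadj v y hvy with ⟨_, h1⟩ | ⟨h1, h2⟩ | ⟨i, hi, he⟩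
        · exact h1.symm
        · exfalso
          have h3 := hmax y (mem_sdiff.2 ⟨hy, h1⟩)
          have h4 := (hp y h1).2
          rw [h2] at h4; omega
        · exfalso
          have hm' : v ∈ s(c i, c ((i + 1) % k)) := by rw [← he]; simp
          rw [Sym2.mem_iff] at hm'
          rcases hm' with e | e
          · exact hvA (e ▸ mem_image_of_mem _ (mem_range.2 hi))
          · exact hvA (e ▸ mem_image_of_mem _ (mem_range.2 (Nat.mod_lt _ (by omega))))
      refine ⟨Function.update f v x, ?_, ?_⟩
      · intro a ha b hb hab
        by_cases hav : a = v <;> by_cases hbv : b = v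
        · rw [hav, hbv]
        · rw [hav, Function.update_self, Function.update_of_ne hbv] at hab
          exact absurd hab.symm (hxf b hb hbv)
        · rw [hbv, Function.update_self, Function.update_of_ne hav] at hab
          exact absurd hab (hxf a ha hav)
        · rw [Function.update_of_ne hav, Function.update_of_ne hbv] at hab
          exact hf1 a (mem_erase.2 ⟨hav, ha⟩) b (mem_erase.2 ⟨hbv, hb⟩) hab
      · intro a ha b hb hab
        by_cases hav : a = v
        · rw [hav] at hab
          have hb' := hvn b hb hab
          rw [hav, hb', Function.update_self, Function.update_of_ne hpv.1.ne']
          exact hxa.symm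
        · by_cases hbv : b = v
          · rw [hbv] at hab
            have ha' := hvn a ha hab.symm
            rw [hbv, ha', Function.update_self, Function.update_of_ne hpv.1.ne']
            exact hxa
          · rw [Function.update_of_ne hav, Function.update_of_ne hbv]
            exact hf2 a (mem_erase.2 ⟨hav, ha⟩) b (mem_erase.2 ⟨hbv, hb⟩) hab
  obtain ⟨f, hf1, hf2⟩ := key (n - k) univ (subset_univ _) (by rw [card_univ, hV]; omega)
    (fun _ _ _ => mem_univ _)
  exact ⟨f, fun u v huv => hf1 u (mem_univ _) v (mem_univ _) huv,
    fun u v huv => hf2 u (mem_univ _) v (mem_univ _) huv⟩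

end cyc
end RUF

namespace RUF
open Classical Finset

lemma hall {ι α : Type*} [Nonempty α] (s : Finset ι) (A : ι → Finset α)
    (h : ∀ t ⊆ s, t.card ≤ (t.biUnion A).card) :
    ∃ f : ι → α, (∀ i ∈ s, ∀ j ∈ s, f i = f j → i = j) ∧ ∀ i ∈ s, f i ∈ A i := by
  have := (Finset.all_card_le_biUnion_card_iff_exists_injective (fun i : s => A i)).1 (by
    intro t
    have h1 := h (t.image Subtype.val) (by
      intro x hx; obtain ⟨y, _, rfl⟩ := mem_image.1 hx; exact y.2)
    rw [card_image_of_injective _ Subtype.val_injective] at h1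
    rwa [image_biUnion] at h1)
  obtain ⟨f, hf1, hf2⟩ := this
  refine ⟨fun i => if hi : i ∈ s then f ⟨i, hi⟩ else Classical.arbitrary α, ?_, ?_⟩
  · intro i hi j hj hij
    simp only [hi, hj, dif_pos] at hij
    simpa using hf1 hij
  · intro i hi
    simp only [hi, dif_pos]
    exact hf2 ⟨i, hi⟩

section degs
variable {V : Type*} [Fintype V] {U : SimpleGraph V} {n : ℕ}

/-- degree -/
noncomputable def dg (U : SimpleGraph V) (v : V) : ℕ := (nb U univ v).card

/-- leaves -/
noncomputable def lv (U : SimpleGraph V) : Finset V := univ.filter (fun v => dg U v = 1)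

/-- branching vertices -/
noncomputable def br (U : SimpleGraph V) : Finset V := univ.filter (fun v => 3 ≤ dg U v)

lemma sum_dg (hE : U.edgeSet.ncard = n) : ∑ v, dg U v = 2 * n := by
  rw [← edges_card hE, ← SimpleGraph.sum_degrees_eq_twice_card_edges]
  refine sum_congr rfl ?_
  intro v _
  rw [dg, ← SimpleGraph.card_neighborFinset_eq_degree]
  congr 1
  ext w
  simp [mem_nb]

lemma dg_pos (hU : U.Connected) (hV : Fintype.card V = n) (hn : 2 ≤ n) (v : V) : 1 ≤ dg U v := by
  have : Nontrivial V := by rw [← Fintype.one_lt_card_iff_nontrivial]; omega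
  obtain ⟨w, hw⟩ := hU.preconnected.exists_adj_of_nontrivial v
  exact card_pos.2 ⟨w, mem_nb.2 ⟨mem_univ _, hw⟩⟩

lemma sum_br (hU : U.Connected) (hV : Fintype.card V = n) (hE : U.edgeSet.ncard = n)
    (hn : 2 ≤ n) : ∑ v ∈ br U, (dg U v - 2) = (lv U).card := by
  have h1 : ∀ v, dg U v + (if dg U v = 1 then 1 else 0) =
      2 + (if 3 ≤ dg U v then dg U v - 2 else 0) := by
    intro v
    have := dg_pos hU hV hn v
    split_ifs <;> omega
  have h2 := sum_congr (rfl : (univ : Finset V) = univ) (fun v _ => h1 v)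
  rw [sum_add_distrib, sum_add_distrib, sum_dg hE, ← sum_filter, ← sum_filter, sum_const,
    sum_const, card_univ, hV] at h2
  simp only [smul_eq_mul, mul_one] at h2
  rw [br, lv]
  omega

lemma dg_le (hU : U.Connected) (hV : Fintype.card V = n) (hE : U.edgeSet.ncard = n)
    (hn : 2 ≤ n) (v : V) : dg U v ≤ (lv U).card + 2 := by
  by_cases hv : 3 ≤ dg U v
  · have h1 := sum_br hU hV hE hn
    have h2 : dg U v - 2 ≤ ∑ v ∈ br U, (dg U v - 2) :=
      single_le_sum (f := fun v => dg U v - 2) (fun _ _ => Nat.zero_le _)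
        (show v ∈ br U from mem_filter.2 ⟨mem_univ _, hv⟩)
    omega
  · omega

/-- two leaves are not adjacent -/
lemma lv_indep (hU : U.Connected) (hV : Fintype.card V = n) (hn : 3 ≤ n) {u v : V}
    (hu : u ∈ lv U) (hv : v ∈ lv U) : ¬ U.Adj u v := by
  intro huv
  have h1 : ∀ a b w, a ∈ lv U → U.Adj a b → U.Adj a w → w = b := by
    intro a b w ha hb hw
    have : dg U a = 1 := (mem_filter.1 ha).2
    obtain ⟨y, hy⟩ := card_eq_one.1 this
    have h1 : b ∈ nb U univ a := mem_nb.2 ⟨mem_univ _, hb⟩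
    have h2 : w ∈ nb U univ a := mem_nb.2 ⟨mem_univ _, hw⟩
    rw [hy, mem_singleton] at h1 h2
    rw [h1, h2]
  have hex : ∃ w, w ∉ ({u, v} : Finset V) := by
    by_contra hc
    push Not at hc
    have h2 : (univ : Finset V).card ≤ ({u, v} : Finset V).card := card_le_card (fun x _ => hc x)
    have h3 : ({u, v} : Finset V).card ≤ 2 := card_le_two
    rw [card_univ] at h2
    omega
  obtain ⟨w, hw⟩ := hex
  obtain ⟨q⟩ := hU.preconnected u w
  obtain ⟨d, _, hd1, hd2⟩ := q.exists_boundary_dart (({u, v} : Finset V) : Set V) (by simp) (by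
    simpa using hw)
  have hadj := d.adj
  simp only [coe_insert, coe_singleton, Set.mem_insert_iff, Set.mem_singleton_iff] at hd1 hd2
  rcases hd1 with e | e
  · rw [e] at hadj
    exact hd2 (Or.inr (h1 u v _ hu huv hadj))
  · rw [e] at hadj
    exact hd2 (Or.inl (h1 v u _ hv huv.symm hadj))

lemma lv_parent : ∃ par : V → V, ∀ v ∈ lv U, U.Adj v (par v) ∧ ∀ w, U.Adj v w → w = par v := by
  have : ∀ v, ∃ y, v ∈ lv U → U.Adj v y ∧ ∀ w, U.Adj v w → w = y := by
    intro v
    by_cases hv : v ∈ lv U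
    · obtain ⟨y, hy⟩ := card_eq_one.1 (mem_filter.1 hv).2
      refine ⟨y, fun _ => ⟨?_, ?_⟩⟩
      · have : y ∈ nb U univ v := by rw [hy]; simp
        exact (mem_nb.1 this).2
      · intro w hw
        have : w ∈ nb U univ v := mem_nb.2 ⟨mem_univ _, hw⟩
        rw [hy] at this; simpa using this
    · exact ⟨v, fun h => absurd h hv⟩
  choose par hpar using this
  exact ⟨par, hpar⟩

/-- a large set of vertices of degree at most two with disjoint closed neighbourhoods -/
lemma spread (hU : U.Connected) (hV : Fintype.card V = n) (hE : U.edgeSet.ncard = n) {m : ℕ}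
    (hn : 17 * m < n) (hm : 1 ≤ m) (hl : (lv U).card ≤ 2 * m - 2) :
    ∃ (r : V) (h : V → ℕ) (p : V → V) (a b : V) (P : Finset V),
      (∀ v, v ≠ r → U.Adj v (p v) ∧ h (p v) + 1 = h v) ∧
      (∀ x y, U.Adj x y → (x ≠ r ∧ p x = y) ∨ (y ≠ r ∧ p y = x) ∨ s(x, y) = s(a, b)) ∧
      3 * m - 3 ≤ P.card ∧ (∀ x ∈ P, dg U x ≤ 2) ∧ (∀ x ∈ P, ∀ y ∈ P, ¬ U.Adj x y) ∧
      (∀ x ∈ P, ∀ y ∈ P, ∀ w, U.Adj x w → U.Adj y w → x = y) := by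
  have hr : ∃ r, dg U r ≤ 2 := by
    by_contra hc
    push Not at hc
    have h1 : ∑ v : V, 3 ≤ ∑ v, dg U v := sum_le_sum (fun v _ => hc v)
    rw [sum_dg hE, sum_const, card_univ, hV, smul_eq_mul] at h1
    omega
  obtain ⟨r, hr⟩ := hr
  obtain ⟨h, p, a, b, h0, hp, hadj⟩ := rep_tree hU hV hE r
  let B : Finset V := ({a, b} ∪ insert r (nb U univ r)) ∪
    (br U).biUnion (fun v => insert v (nb U univ v))
  have hB : B.card ≤ 8 * m - 3 := by
    have h1 : ((br U).biUnion (fun v => insert v (nb U univ v))).card ≤ 4 * (lv U).card := by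
      rw [← sum_br hU hV hE (by omega), mul_sum]
      refine card_biUnion_le.trans (sum_le_sum ?_)
      intro v hv
      have h2 := card_insert_le v (nb U univ v)
      have h3 : 3 ≤ dg U v := (mem_filter.1 hv).2
      change _ ≤ dg U v + 1 at h2
      omega
    have h2 := card_union_le ({a, b} ∪ insert r (nb U univ r))
      ((br U).biUnion (fun v => insert v (nb U univ v)))
    have h3 := card_union_le {a, b} (insert r (nb U univ r))
    have h4 : ({a, b} : Finset V).card ≤ 2 := card_le_two
    have h5 := card_insert_le r (nb U univ r)
    change _ ≤ dg U r + 1 at h5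
    change B.card ≤ _ at h2
    omega
  have hgood : 9 * m - 9 < (Bᶜ).card := by rw [card_compl, hV]; omega
  obtain ⟨i, hi, hic⟩ := exists_lt_card_fiber_of_mul_lt_card_of_maps_to
    (s := Bᶜ) (t := range 3) (f := fun v => h v % 3) (n := 3 * m - 3)
    (fun v _ => mem_range.2 (Nat.mod_lt _ (by norm_num)))
    (by rw [card_range]; omega)
  have hPB : ∀ x ∈ Bᶜ.filter (fun v => h v % 3 = i), x ≠ a ∧ x ≠ b ∧ x ≠ r ∧ ¬ U.Adj r x ∧
      h x % 3 = i ∧ dg U x ≤ 2 ∧ ∀ w, U.Adj w x → dg U w ≤ 2 := by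
    intro x hx
    obtain ⟨hx1, hx2⟩ := mem_filter.1 hx
    rw [mem_compl] at hx1
    simp only [B, mem_union, mem_insert, mem_singleton, mem_biUnion, not_or, not_exists,
      not_and, mem_nb, br, mem_filter, mem_univ, true_and] at hx1
    obtain ⟨⟨⟨q1, q2⟩, q3, q4⟩, q5⟩ := hx1
    refine ⟨q1, q2, q3, q4, hx2, ?_, ?_⟩
    · by_contra hc; exact (q5 x (by omega)).1 rfl
    · intro w hw
      by_contra hc; exact (q5 w (by omega)).2 hw
  refine ⟨r, h, p, a, b, Bᶜ.filter (fun v => h v % 3 = i), hp, hadj, hic.le,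
    fun x hx => (hPB x hx).2.2.2.2.2.1, ?_, ?_⟩
  · intro x hx y hy hxy
    obtain ⟨x1, x2, x3, x4, x5, x6, x7⟩ := hPB x hx
    obtain ⟨y1, y2, y3, y4, y5, y6, y7⟩ := hPB y hy
    rcases hadj x y hxy with ⟨e1, e2⟩ | ⟨e1, e2⟩ | e
    · have := (hp x e1).2; rw [e2] at this; omega
    · have := (hp y e1).2; rw [e2] at this; omega
    · rcases Sym2.eq_iff.1 e with ⟨e1, _⟩ | ⟨e1, _⟩
      · exact x1 e1
      · exact x2 e1
  · intro x hx y hy w hxw hyw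
    obtain ⟨x1, x2, x3, x4, x5, x6, x7⟩ := hPB x hx
    obtain ⟨y1, y2, y3, y4, y5, y6, y7⟩ := hPB y hy
    by_contra hne
    have hx' : (x ≠ r ∧ p x = w) ∨ (w ≠ r ∧ p w = x) := by
      rcases hadj x w hxw with e | e | e
      · exact Or.inl e
      · exact Or.inr e
      · rcases Sym2.eq_iff.1 e with ⟨e1, _⟩ | ⟨e1, _⟩
        · exact absurd e1 x1
        · exact absurd e1 x2
    have hy' : (y ≠ r ∧ p y = w) ∨ (w ≠ r ∧ p w = y) := by
      rcases hadj y w hyw with e | e | e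
      · exact Or.inl e
      · exact Or.inr e
      · rcases Sym2.eq_iff.1 e with ⟨e1, _⟩ | ⟨e1, _⟩
        · exact absurd e1 y1
        · exact absurd e1 y2
    rcases hx' with ⟨e1, e2⟩ | ⟨e1, e2⟩ <;> rcases hy' with ⟨e3, e4⟩ | ⟨e3, e4⟩
    · have hwr : w ≠ r := by
        rintro rfl; exact x4 hxw.symm
      have h3 := hp w hwr
      have hx6 := (hp x e1).2
      have hy6 := (hp y e3).2
      have hd : dg U w ≤ 2 := x7 w hxw.symm
      have hs : ({p w, x, y} : Finset V) ⊆ nb U univ w := by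
        intro z hz
        simp only [mem_insert, mem_singleton] at hz
        rcases hz with rfl | rfl | rfl
        · exact mem_nb.2 ⟨mem_univ _, h3.1⟩
        · exact mem_nb.2 ⟨mem_univ _, hxw.symm⟩
        · exact mem_nb.2 ⟨mem_univ _, hyw.symm⟩
      have hc := card_le_card hs
      have n1 : p w ≠ x := by intro e; rw [e2] at hx6; rw [e] at h3; omega
      have n2 : p w ≠ y := by intro e; rw [e4] at hy6; rw [e] at h3; omega
      have h33 : ({p w, x, y} : Finset V).card = 3 := by
        rw [card_eq_three]; exact ⟨_, _, _, n1, n2, hne, rfl⟩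
      rw [h33] at hc
      change 3 ≤ dg U w at hc
      omega
    · have a1 := (hp x e1).2; have a2 := (hp w e3).2
      rw [e2] at a1; rw [e4] at a2; omega
    · have a1 := (hp y e3).2; have a2 := (hp w e1).2
      rw [e4] at a1; rw [e2] at a2; omega
    · exact hne (e2.symm.trans e4)

end degs
end RUF

namespace RUF
open Classical Finset

section caseS
variable {V W : Type*} [Fintype V] [Fintype W] {G : SimpleGraph W} {U : SimpleGraph V} {n m : ℕ}

lemma spread_plus {K : Finset W} (hK : Ind G K) {t : ℕ} (hKc : Fintype.card V ≤ K.card + t)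
    (P : Finset V) (hPt : P.card = t) (hPd : ∀ x ∈ P, dg U x ≤ 2)
    (hPi : ∀ x ∈ P, ∀ y ∈ P, ¬ U.Adj x y)
    (hPn : ∀ x ∈ P, ∀ y ∈ P, ∀ w, U.Adj x w → U.Adj y w → x = y)
    (Z : Finset W) (hZ : t ≤ Z.card) (hZK : ∀ z ∈ Z, z ∉ K ∧ 2 * t ≤ (nb Gᶜ K z).card) :
    Contains Gᶜ U := by
  by_cases ht : t = 0
  · exact ext_big hK (by omega)
  obtain ⟨z0, hz0⟩ := card_pos.1 (show 0 < Z.card by omega)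
  have : Nonempty W := ⟨z0⟩
  obtain ⟨f, hf1, hf2⟩ := exists_sdr P (fun _ => Z) (fun i _ => by omega)
  let Q := P.biUnion (nb U univ)
  have hQc : Q.card ≤ 2 * t := by
    have h1 : Q.card ≤ ∑ x ∈ P, dg U x := card_biUnion_le
    have h2 : ∑ x ∈ P, dg U x ≤ ∑ x ∈ P, 2 := sum_le_sum hPd
    rw [sum_const, smul_eq_mul] at h2
    omega
  have hQ : ∀ q ∈ Q, ∃ x ∈ P, U.Adj x q := by
    intro q hq
    obtain ⟨x, hx, hxq⟩ := mem_biUnion.1 hq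
    exact ⟨x, hx, (mem_nb.1 hxq).2⟩
  choose! o ho using hQ
  obtain ⟨g, hg1, hg2⟩ := exists_sdr Q (fun q => nb Gᶜ K (f (o q))) (by
    intro q hq
    have := (hZK _ (hf2 _ (ho q hq).1)).2
    omega)
  have hPQ : Disjoint P Q := by
    rw [disjoint_left]
    intro x hx hxQ
    exact hPi _ (ho x hxQ).1 _ hx (ho x hxQ).2
  have hQP : ∀ q ∈ Q, q ∉ P := fun q hq hp => disjoint_left.1 hPQ hp hq
  have e1 : ∀ x ∈ P, (if x ∈ P then f x else g x) = f x := fun x hx => if_pos hx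
  have e2 : ∀ x ∈ Q, (if x ∈ P then f x else g x) = g x := fun x hx => if_neg (hQP x hx)
  refine ext_indep hK P Q (fun v => if v ∈ P then f v else g v) hPQ ?_ ?_ ?_ ?_ ?_ ?_ (by omega)
  · intro x hx v hv
    exact mem_biUnion.2 ⟨x, hx, mem_nb.2 ⟨mem_univ _, hv⟩⟩
  · intro q hq
    rw [e2 q hq]; exact nb_sub _ _ (hg2 q hq)
  · intro x hx
    rw [e1 x hx]; exact (hZK _ (hf2 x hx)).1
  · intro u hu v hv huv
    rw [e1 u hu, e1 v hv] at huv; exact hf1 u hu v hv huv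
  · intro u hu v hv huv
    rw [e2 u hu, e2 v hv] at huv; exact hg1 u hu v hv huv
  · intro x hx q hq hxq
    rw [e1 x hx, e2 q hq]
    have h1 := (mem_nb.1 (hg2 q hq)).2
    rwa [← hPn x hx _ (ho q hq).1 q hxq (ho q hq).2] at h1

lemma greedy_part [Nonempty W] {r : V} {h : V → ℕ} {p : V → V} {a b : V}
    (hp : ∀ v, v ≠ r → U.Adj v (p v) ∧ h (p v) + 1 = h v)
    (hadj : ∀ x y, U.Adj x y → (x ≠ r ∧ p x = y) ∨ (y ≠ r ∧ p y = x) ∨ s(x, y) = s(a, b))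
    {R : Finset W} {D : ℕ} (hR : ∀ x ∈ R, (nb G R x).card ≤ D) :
    ∀ N, ∀ S : Finset V, S.card = N → N + 2 * D ≤ R.card →
      ∃ f : V → W, (∀ u ∈ S, f u ∈ R) ∧ (∀ u ∈ S, ∀ v ∈ S, f u = f v → u = v) ∧
        (∀ u ∈ S, ∀ v ∈ S, U.Adj u v → Gᶜ.Adj (f u) (f v)) := by
  intro N
  induction N with
  | zero =>
    intro S hS _
    rw [card_eq_zero] at hS
    subst hS
    exact ⟨fun _ => Classical.arbitrary W, by simp, by simp, by simp⟩
  | succ N ih =>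
    intro S hS hN
    have hne : S.Nonempty := by rw [← card_pos]; omega
    obtain ⟨v, hvS, hmax⟩ := exists_max_image S h hne
    obtain ⟨f, hf0, hf1, hf2⟩ := ih (S.erase v) (by rw [card_erase_of_mem hvS]; omega) (by omega)
    let o : V := if v = a then b else a
    have hvn : ∀ y ∈ S, U.Adj v y → y = p v ∨ y = o := by
      intro y hy hvy
      rcases hadj v y hvy with ⟨_, h1⟩ | ⟨h1, h2⟩ | he
      · exact Or.inl h1.symm
      · exfalso
        have h3 := hmax y hy
        have h4 := (hp y h1).2
        rw [h2] at h4; omega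
      · right
        rcases Sym2.eq_iff.1 he with ⟨e1, e2⟩ | ⟨e1, e2⟩
        · simp only [o, if_pos e1, e2]
        · by_cases hva : v = a
          · exfalso; rw [hva, e2] at hvy; exact hvy.ne rfl
          · simp only [o, if_neg hva, e2]
    have hbd : ∀ y, (if y ∈ S.erase v then nb G R (f y) else ∅).card ≤ D := by
      intro y
      split_ifs with hy
      · exact hR _ (hf0 y hy)
      · simp
    have hcard : ((S.erase v).image f ∪ ((if p v ∈ S.erase v then nb G R (f (p v)) else ∅) ∪
        (if o ∈ S.erase v then nb G R (f o) else ∅))).card < R.card := by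
      have h1 := card_union_le ((S.erase v).image f)
        ((if p v ∈ S.erase v then nb G R (f (p v)) else ∅) ∪
        (if o ∈ S.erase v then nb G R (f o) else ∅))
      have h2 := card_union_le (if p v ∈ S.erase v then nb G R (f (p v)) else ∅)
        (if o ∈ S.erase v then nb G R (f o) else ∅)
      have h3 : ((S.erase v).image f).card ≤ _ := card_image_le
      rw [card_erase_of_mem hvS] at h3
      have h4 := hbd (p v)
      have h5 := hbd o
      omega
    obtain ⟨x, hx, hx'⟩ := exists_mem_notMem_of_card_lt_card hcard
    simp only [mem_union, not_or] at hx'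
    obtain ⟨x1, x2, x3⟩ := hx'
    have hxf : ∀ u ∈ S, u ≠ v → f u ≠ x := by
      intro u hu huv e
      exact x1 (mem_image.2 ⟨u, mem_erase.2 ⟨huv, hu⟩, e⟩)
    have hxa : ∀ y ∈ S, U.Adj v y → Gᶜ.Adj (f y) x := by
      intro y hy hvy
      have hy' : y ∈ S.erase v := mem_erase.2 ⟨hvy.ne', hy⟩
      rw [SimpleGraph.compl_adj]
      refine ⟨hxf y hy hvy.ne', ?_⟩
      intro hG
      rcases hvn y hy hvy with e | e
      · rw [← e, if_pos hy'] at x2; exact x2 (mem_nb.2 ⟨hx, hG⟩)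
      · rw [← e, if_pos hy'] at x3; exact x3 (mem_nb.2 ⟨hx, hG⟩)
    refine ⟨Function.update f v x, ?_, ?_, ?_⟩
    · intro u hu
      by_cases huv : u = v
      · rw [huv, Function.update_self]; exact hx
      · rw [Function.update_of_ne huv]; exact hf0 u (mem_erase.2 ⟨huv, hu⟩)
    · intro a ha b hb hab
      by_cases hav : a = v <;> by_cases hbv : b = v
      · rw [hav, hbv]
      · rw [hav, Function.update_self, Function.update_of_ne hbv] at hab
        exact absurd hab.symm (hxf b hb hbv)
      · rw [hbv, Function.update_self, Function.update_of_ne hav] at hab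
        exact absurd hab (hxf a ha hav)
      · rw [Function.update_of_ne hav, Function.update_of_ne hbv] at hab
        exact hf1 a (mem_erase.2 ⟨hav, ha⟩) b (mem_erase.2 ⟨hbv, hb⟩) hab
    · intro a ha b hb hab
      by_cases hav : a = v
      · rw [hav] at hab
        rw [hav, Function.update_self, Function.update_of_ne hab.ne']
        exact (hxa b hb hab).symm
      · by_cases hbv : b = v
        · rw [hbv] at hab
          rw [hbv, Function.update_self, Function.update_of_ne hav]
          exact hxa a ha hab.symm
        · rw [Function.update_of_ne hav, Function.update_of_ne hbv]
          exact hf2 a (mem_erase.2 ⟨hav, ha⟩) b (mem_erase.2 ⟨hbv, hb⟩) hab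

lemma pack {r : V} {h : V → ℕ} {p : V → V} {a b : V}
    (hp : ∀ v, v ≠ r → U.Adj v (p v) ∧ h (p v) + 1 = h v)
    (hadj : ∀ x y, U.Adj x y → (x ≠ r ∧ p x = y) ∨ (y ≠ r ∧ p y = x) ∨ s(x, y) = s(a, b))
    {R : Finset W} {D : ℕ} (hR : ∀ x ∈ R, (nb G R x).card ≤ D)
    (hRc : Fintype.card V ≤ R.card) (P : Finset V) (hPc : 3 * D ≤ P.card)
    (hPd : ∀ x ∈ P, dg U x ≤ 2)
    (hPi : ∀ x ∈ P, ∀ y ∈ P, ¬ U.Adj x y)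
    (hPn : ∀ x ∈ P, ∀ y ∈ P, ∀ w, U.Adj x w → U.Adj y w → x = y) : Contains Gᶜ U := by
  have hne : Nonempty W := by
    have : 0 < Fintype.card V := Fintype.card_pos_iff.2 ⟨r⟩
    obtain ⟨x, _⟩ := card_pos.1 (show 0 < R.card by omega)
    exact ⟨x⟩
  have hPV : P.card ≤ Fintype.card V := card_le_univ P
  have hPcc : (Pᶜ).card = Fintype.card V - P.card := card_compl P
  obtain ⟨f, hf0, hf1, hf2⟩ := greedy_part (G := G) (W := W) hp hadj hR _ Pᶜ rfl (by omega)
  let T := R \ (Pᶜ).image f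
  have hT : P.card ≤ T.card := by
    have h1 : R.card - ((Pᶜ).image f).card ≤ T.card := le_card_sdiff ((Pᶜ).image f) R
    have h2 : ((Pᶜ).image f).card ≤ (Pᶜ).card := card_image_le
    omega
  have hTm : ∀ y, y ∈ T ↔ y ∈ R ∧ ∀ u, u ∉ P → f u ≠ y := by
    intro y; simp only [T, mem_sdiff, mem_image, mem_compl, not_exists, not_and, ne_eq]
  -- spots forbidden for `x`
  let Fb : V → Finset W := fun x => (nb U univ x).biUnion (fun w => nb G R (f w))
  have hnP : ∀ x ∈ P, ∀ w, U.Adj x w → w ∈ Pᶜ := by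
    intro x hx w hw
    rw [mem_compl]; intro hwP; exact hPi x hx w hwP hw
  have hFb : ∀ x ∈ P, (Fb x).card ≤ 2 * D := by
    intro x hx
    have h1 : (Fb x).card ≤ ∑ w ∈ nb U univ x, (nb G R (f w)).card := card_biUnion_le
    have h2 : ∑ w ∈ nb U univ x, (nb G R (f w)).card ≤ ∑ w ∈ nb U univ x, D :=
      sum_le_sum (fun w hw => hR _ (hf0 w (hnP x hx w (mem_nb.1 hw).2)))
    rw [sum_const, smul_eq_mul] at h2
    have h3 : (nb U univ x).card ≤ 2 := hPd x hx
    have h4 : (nb U univ x).card * D ≤ 2 * D := Nat.mul_le_mul_right _ h3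
    omega
  obtain ⟨g, hg1, hg2⟩ := hall P (fun x => T \ Fb x) (by
    intro A hA
    rcases Nat.lt_or_ge D A.card with hAD | hAD
    · have : T ⊆ A.biUnion (fun x => T \ Fb x) := by
        intro y hy
        by_contra hc
        simp only [mem_biUnion, mem_sdiff, not_exists, not_and, not_not] at hc
        have hyR := ((hTm y).1 hy).1
        have hown : ∀ x ∈ A, ∃ w, U.Adj x w ∧ G.Adj y (f w) := by
          intro x hx
          obtain ⟨w, hw, hwy⟩ := mem_biUnion.1 (hc x hx hy)
          exact ⟨w, (mem_nb.1 hw).2, (mem_nb.1 hwy).2.symm⟩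
        choose! w hw using hown
        have hle : A.card ≤ (nb G R y).card := by
          refine card_le_card_of_injOn (fun x => f (w x)) ?_ ?_
          · intro x hx
            exact mem_nb.2 ⟨hf0 _ (hnP x (hA hx) _ (hw x hx).1), (hw x hx).2⟩
          · intro x hx x' hx' hxx
            have := hf1 _ (hnP x (hA hx) _ (hw x hx).1) _ (hnP x' (hA hx') _ (hw x' hx').1) hxx
            refine hPn x (hA hx) x' (hA hx') (w x) (hw x hx).1 ?_
            rw [this]; exact (hw x' hx').1
        have := hR y hyR
        omega
      exact (card_le_card hA).trans (hT.trans (card_le_card this))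
    · rcases A.eq_empty_or_nonempty with rfl | ⟨x, hx⟩
      · simp
      · have h1 : T \ Fb x ⊆ A.biUnion (fun x => T \ Fb x) :=
          subset_biUnion_of_mem (fun x => T \ Fb x) hx
        have h2 := card_le_card h1
        have h3 := le_card_sdiff (Fb x) T
        have h4 := hFb x (hA hx)
        omega)
  have hg3 : ∀ x ∈ P, g x ∈ R ∧ (∀ u, u ∉ P → f u ≠ g x) ∧ ∀ w, U.Adj x w → Gᶜ.Adj (g x) (f w) := by
    intro x hx
    obtain ⟨h1, h2⟩ := mem_sdiff.1 (hg2 x hx)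
    obtain ⟨h3, h4⟩ := (hTm _).1 h1
    refine ⟨h3, h4, ?_⟩
    intro w hw
    rw [SimpleGraph.compl_adj]
    have hwP := hnP x hx w hw
    refine ⟨(h4 w (mem_compl.1 hwP)).symm, ?_⟩
    intro hG
    exact h2 (mem_biUnion.2 ⟨w, mem_nb.2 ⟨mem_univ _, hw⟩, mem_nb.2 ⟨h3, hG.symm⟩⟩)
  refine ⟨fun v => if v ∈ P then g v else f v, ?_, ?_⟩
  · intro u v huv
    by_cases hu : u ∈ P <;> by_cases hv : v ∈ P
    · simp only [hu, hv, if_true] at huv; exact hg1 u hu v hv huv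
    · simp only [hu, hv, if_true, if_false] at huv
      exact absurd huv.symm ((hg3 u hu).2.1 v hv)
    · simp only [hu, hv, if_true, if_false] at huv
      exact absurd huv ((hg3 v hv).2.1 u hu)
    · simp only [hu, hv, if_false] at huv
      exact hf1 u (mem_compl.2 hu) v (mem_compl.2 hv) huv
  · intro u v huv
    by_cases hu : u ∈ P <;> by_cases hv : v ∈ P
    · exact absurd huv (hPi u hu v hv)
    · simp only [hu, hv, if_true, if_false]; exact (hg3 u hu).2.2 v huv
    · simp only [hu, hv, if_true, if_false]; exact ((hg3 v hv).2.2 u huv.symm).symm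
    · simp only [hu, hv, if_false]; exact hf2 u (mem_compl.2 hu) v (mem_compl.2 hv) huv

lemma caseS (hG : ¬ Contains G (fan m)) (hm : 1 ≤ m) (hn : 17 * m < n)
    (hW : Fintype.card W = 2 * n - 1) (hU : U.Connected) (hV : Fintype.card V = n)
    (hE : U.edgeSet.ncard = n) {K : Finset W} (hK : Ind G K) {t : ℕ} (hKc : K.card + t = n)
    (ht : t ≤ 2 * m - 2) (hl : (lv U).card ≤ 2 * m - 2) : Contains Gᶜ U := by
  obtain ⟨r, h, p, a, b, P, hp, hadj, hPc, hPd, hPi, hPn⟩ := spread hU hV hE hn hm hl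
  let Z := Kᶜ.filter (fun z => 2 * t ≤ (nb Gᶜ K z).card)
  by_cases hZ : t ≤ Z.card
  · obtain ⟨P', hP', hP'c⟩ := exists_subset_card_eq (show t ≤ P.card by omega)
    refine spread_plus hK (by omega) P' hP'c (fun x hx => hPd x (hP' hx))
      (fun x hx y hy => hPi x (hP' hx) y (hP' hy))
      (fun x hx y hy => hPn x (hP' hx) y (hP' hy)) Z hZ ?_
    intro z hz
    obtain ⟨h1, h2⟩ := mem_filter.1 hz
    exact ⟨mem_compl.1 h1, h2⟩
  · let R := Kᶜ.filter (fun z => ¬ 2 * t ≤ (nb Gᶜ K z).card)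
    have hRc : Z.card + R.card = (Kᶜ).card := card_filter_add_card_filter_not _
    rw [card_compl] at hRc
    have hRm : ∀ z ∈ R, z ∉ K ∧ (nb Gᶜ K z).card < 2 * t := by
      intro z hz
      obtain ⟨h1, h2⟩ := mem_filter.1 hz
      exact ⟨mem_compl.1 h1, by omega⟩
    refine pack hp hadj (R := R) (D := m - 1) ?_ (by omega) P (by omega) hPd hPi hPn
    intro x hx
    by_contra hc
    obtain ⟨M, hM, hMc⟩ := exists_subset_card_eq (show m ≤ (nb G R x).card by omega)
    apply hG
    have hMR : ∀ y ∈ M, y ∈ R ∧ G.Adj x y := fun y hy => mem_nb.1 (hM hy)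
    refine fan_of_sdr hMc K (fun y hy => (hMR y hy).2) ?_ ?_
    · rw [disjoint_left]
      intro y hy hyK
      exact (hRm y (hMR y hy).1).1 hyK
    · intro y hy
      have h1 := hRm x hx
      have h2 := hRm y (hMR y hy).1
      have h3 := nb_compl_notmem (G := G) h1.1
      have h4 : (nb G (nb G K x) y).card + (nb Gᶜ (nb G K x) y).card = (nb G K x).card :=
        nb_compl_notmem (fun h => h2.1 (nb_sub _ _ h))
      have h5 := nb_card_mono (G := Gᶜ) (nb_sub (G := G) K x) y
      omega

end caseS
end RUF

namespace RUF
open Classical Finset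

section star
variable {W : Type*} [Fintype W] {G : SimpleGraph W} {n m : ℕ}

lemma double_count (G : SimpleGraph W) (A B : Finset W) :
    ∑ x ∈ A, (nb G B x).card = ∑ y ∈ B, (nb G A y).card := by
  have h1 : ∀ (A : Finset W) x, (nb G A x).card = ∑ y ∈ A, if G.Adj x y then 1 else 0 := by
    intro A x; rw [nb, card_filter]
  simp only [h1]
  rw [sum_comm]
  refine sum_congr rfl (fun y _ => sum_congr rfl (fun x _ => ?_))
  simp only [G.adj_comm]

lemma IsMat.erase {S M : Finset W} {g : W → W} (h : IsMat G S M g) (y : W) :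
    IsMat G S (M.erase y) g :=
  ⟨fun x hx => h.mem x (mem_of_mem_erase hx), fun x hx => h.gmem x (mem_of_mem_erase hx),
    fun x hx hx' => h.gnot x (mem_of_mem_erase hx) (mem_of_mem_erase hx'),
    fun x hx => h.adj x (mem_of_mem_erase hx),
    fun x hx z hz => h.inj x (mem_of_mem_erase hx) z (mem_of_mem_erase hz)⟩

/-- no augmenting path of length three -/
lemma no_augment {S M : Finset W} {g : W → W} (h : IsMat G S M g)
    (hmax : ∀ M' g', IsMat G S M' g' → M'.card ≤ M.card) {y i i' : W} (hy : y ∈ M)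
    (hi : i ∈ S \ (M ∪ M.image g)) (hi' : i' ∈ S \ (M ∪ M.image g))
    (h1 : G.Adj y i) (h2 : G.Adj (g y) i') : i = i' := by
  by_contra hne
  simp only [mem_sdiff, mem_union, not_or] at hi hi'
  obtain ⟨a1, a2, a3⟩ := hi
  obtain ⟨b1, b2, b3⟩ := hi'
  have hgi : ∀ z ∈ M, g z ≠ i := fun z hz e => a3 (mem_image.2 ⟨z, hz, e⟩)
  have hgi' : ∀ z ∈ M, g z ≠ i' := fun z hz e => b3 (mem_image.2 ⟨z, hz, e⟩)
  have hgy : ∀ z ∈ M, g z ≠ y := fun z hz e => h.gnot z hz (e ▸ hy)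
  have m1 := (h.erase y).insert (x := y) (y := i) (h.mem y hy) a1 (by simp)
    (fun hh => a2 (mem_of_mem_erase hh)) (by
      intro hh; obtain ⟨z, hz, e⟩ := mem_image.1 hh
      exact hgy z (mem_of_mem_erase hz) e) (by
      intro hh; obtain ⟨z, hz, e⟩ := mem_image.1 hh
      exact hgi z (mem_of_mem_erase hz) e) h1
  rw [insert_erase hy] at m1
  have him : ∀ x, (∀ z ∈ M, z ≠ y → g z ≠ x) → i ≠ x →
      x ∉ M.image (Function.update g y i) := by
    intro x hx hix hh
    obtain ⟨z, hz, e⟩ := mem_image.1 hh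
    by_cases hzy : z = y
    · rw [hzy, Function.update_self] at e; exact hix e
    · rw [Function.update_of_ne hzy] at e; exact hx z hz hzy e
  have m2 := m1.insert (x := g y) (y := i') (h.gmem y hy) b1 (h.gnot y hy) b2
    (him _ (fun z hz hzy e => hzy (h.inj z hz y hy e)) (fun e => hgi y hy e.symm))
    (him _ (fun z hz _ => hgi' z hz) hne) h2
  have := hmax _ _ m2
  rw [card_insert_of_notMem (h.gnot y hy)] at this
  omega

lemma star_core (hG : ¬ Contains G (fan m)) (hm : 18 ≤ m) (hn : m ^ 2 + 1 ≤ n + m)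
    (hn17 : 17 * m < n)
    {P Q : Finset W} (hd : Disjoint P Q) (hc : P ∪ Q = univ) (hW : P.card + Q.card = 2 * n - 1)
    (hP : n ≤ P.card) (hQ : n + 2 ≤ Q.card + 2 * m)
    (hPo : ∀ x ∈ P, (nb G P x).card ≤ 5 * m - 6) (hQo : ∀ x ∈ Q, (nb G Q x).card ≤ 5 * m - 6)
    (hdeg : ∀ v, n ≤ (nb G univ v).card) : False := by
  obtain ⟨s, hs⟩ := Nat.exists_eq_add_of_le hP
  have hsplit : ∀ v, n ≤ (nb G P v).card + (nb G Q v).card := by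
    intro v
    rw [← nb_union_card hd, hc]; exact hdeg v
  have hPQ : ∀ x ∈ P, x ∉ Q := fun x hx hx' => disjoint_left.1 hd hx hx'
  have hQP : ∀ x ∈ Q, x ∉ P := fun x hx hx' => disjoint_left.1 hd hx' hx
  have hP1 : ∀ x ∈ P, s + 1 ≤ (nb G P x).card := by
    intro x hx
    have h1 := hsplit x
    have h2 := card_le_card (nb_sub (G := G) Q x)
    omega
  have hP2 : ∀ x ∈ P, (nb G P x).card ≤ m - 1 := by
    intro x hx
    by_contra hcon
    obtain ⟨M, hM, hMc⟩ := exists_subset_card_eq (show m ≤ (nb G P x).card by omega)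
    apply hG
    have hMR : ∀ y ∈ M, y ∈ P ∧ G.Adj x y := fun y hy => mem_nb.1 (hM hy)
    refine fan_of_sdr hMc Q (fun y hy => (hMR y hy).2) ?_ ?_
    · rw [disjoint_left]
      intro y hy hyQ
      exact hPQ y (hMR y hy).1 hyQ
    · intro y hy
      have hyP := (hMR y hy).1
      have h3 := nb_compl_notmem (G := G) (hPQ y hyP)
      have h4 : (nb G (nb G Q x) y).card + (nb Gᶜ (nb G Q x) y).card = (nb G Q x).card :=
        nb_compl_notmem (fun h => hPQ y hyP (nb_sub _ _ h))
      have h5 := nb_card_mono (G := Gᶜ) (nb_sub (G := G) Q x) y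
      have h6 := hsplit x
      have h7 := hsplit y
      have h8 := hPo x hx
      have h9 := hPo y hyP
      omega
  have hsm : s + 2 ≤ m := by
    obtain ⟨x, hx⟩ := card_pos.1 (show 0 < P.card by omega)
    have := hP1 x hx; have := hP2 x hx; omega
  obtain ⟨M, g, hM, hmax⟩ := max_mat G P
  -- the bound on the matching number
  have hnu : M.card ≤ m - 1 + s := by
    by_contra hcon
    obtain ⟨x, hx⟩ := card_pos.1 (show 0 < Q.card by omega)
    have hxP := hQP x hx
    have ha := nb_compl_notmem (G := G) hxP
    have hgx := hsplit x
    have hqx := hQo x hx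
    let M1 := M.filter (fun y => G.Adj x y ∧ G.Adj x (g y))
    have hM1 : M.card ≤ M1.card + (nb Gᶜ P x).card := by
      have h1 : M1.card + (M.filter (fun y => ¬ (G.Adj x y ∧ G.Adj x (g y)))).card = M.card :=
        card_filter_add_card_filter_not _
      have h2 : (M.filter (fun y => ¬ (G.Adj x y ∧ G.Adj x (g y)))).card ≤ (nb Gᶜ P x).card := by
        refine card_le_card_of_injOn (fun y => if G.Adj x y then g y else y) ?_ ?_
        · intro y hy
          obtain ⟨hy1, hy2⟩ := mem_filter.1 hy
          have e1 : x ≠ y := fun e => hxP (e ▸ hM.mem y hy1)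
          have e2 : x ≠ g y := fun e => hxP (e ▸ hM.gmem y hy1)
          simp only [coe_filter, nb, Set.mem_ofPred_eq, SimpleGraph.compl_adj]
          split_ifs with hxy
          · exact ⟨hM.gmem y hy1, e2, fun h => hy2 ⟨hxy, h⟩⟩
          · exact ⟨hM.mem y hy1, e1, hxy⟩
        · intro y hy z hz hyz
          have hy1 := (mem_filter.1 hy).1
          have hz1 := (mem_filter.1 hz).1
          dsimp only at hyz
          split_ifs at hyz
          · exact hM.inj y hy1 z hz1 hyz
          · exact absurd (hyz ▸ hz1) (hM.gnot y hy1)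
          · exact absurd (hyz ▸ hy1) (hM.gnot z hz1)
          · exact hyz
      omega
    obtain ⟨M2, hM2, hM2c⟩ := exists_subset_card_eq (min_le_left M1.card m)
    have hM2M : ∀ y ∈ M2, y ∈ M ∧ G.Adj x y ∧ G.Adj x (g y) := fun y hy => mem_filter.1 (hM2 hy)
    obtain ⟨Y, hY, hYc⟩ := exists_subset_card_eq (s := nb G Q x) (n := m - M2.card) (by omega)
    have hYm : ∀ y ∈ Y, y ∈ Q ∧ G.Adj x y := fun y hy => mem_nb.1 (hY hy)
    have hne : Nonempty W := ⟨x⟩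
    obtain ⟨σ, hσ1, hσ2⟩ := exists_sdr Y
      (fun y => nb G (nb G P x) y \ (M2 ∪ M2.image g)) (by
        intro y hy
        have hyQ := (hYm y hy).1
        have h0 := le_card_sdiff (M2 ∪ M2.image g) (nb G (nb G P x) y)
        have h1 := card_union_le M2 (M2.image g)
        have h2 : (M2.image g).card ≤ M2.card := card_image_le
        have h3 := nb_compl_notmem (G := G) (hQP y hyQ)
        have h4 : (nb G (nb G P x) y).card + (nb Gᶜ (nb G P x) y).card = (nb G P x).card :=
          nb_compl_notmem (fun h => hQP y hyQ (nb_sub _ _ h))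
        have h5 := nb_card_mono (G := Gᶜ) (nb_sub (G := G) P x) y
        have h6 := hsplit y
        have h7 := hQo y hyQ
        omega)
    have hσ3 : ∀ y ∈ Y, σ y ∈ P ∧ G.Adj x (σ y) ∧ G.Adj y (σ y) ∧ σ y ∉ M2 ∧
        ∀ z ∈ M2, g z ≠ σ y := by
      intro y hy
      obtain ⟨h1, h2⟩ := mem_sdiff.1 (hσ2 y hy)
      rw [mem_union, not_or] at h2
      obtain ⟨h3, h4⟩ := mem_nb.1 h1
      obtain ⟨h5, h6⟩ := mem_nb.1 h3
      exact ⟨h5, h6, h4, h2.1, fun z hz e => h2.2 (mem_image.2 ⟨z, hz, e⟩)⟩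
    have hYM : ∀ y ∈ M2, y ∉ Y := fun y hy hy' =>
      hPQ y (hM.mem y (hM2M y hy).1) (hYm y hy').1
    have hd2 : Disjoint M2 Y := disjoint_left.2 hYM
    apply hG
    refine fan_of_mat (v := x) (M := M2 ∪ Y) (g := fun y => if y ∈ Y then σ y else g y)
      ⟨?_, ?_, ?_, ?_, ?_⟩ ?_
    · intro y hy
      rcases mem_union.1 hy with hy | hy
      · exact mem_nb.2 ⟨mem_univ _, (hM2M y hy).2.1⟩
      · exact mem_nb.2 ⟨mem_univ _, (hYm y hy).2⟩
    · intro y hy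
      refine mem_nb.2 ⟨mem_univ _, ?_⟩
      rcases mem_union.1 hy with hy | hy
      · rw [if_neg (hYM y hy)]; exact (hM2M y hy).2.2
      · rw [if_pos hy]; exact (hσ3 y hy).2.1
    · intro y hy hh
      rcases mem_union.1 hy with hy | hy
      · rw [if_neg (hYM y hy)] at hh
        rcases mem_union.1 hh with hh | hh
        · exact hM.gnot y (hM2M y hy).1 (hM2M _ hh).1
        · exact hPQ _ (hM.gmem y (hM2M y hy).1) (hYm _ hh).1
      · rw [if_pos hy] at hh
        rcases mem_union.1 hh with hh | hh
        · exact (hσ3 y hy).2.2.2.1 hh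
        · exact hPQ _ (hσ3 y hy).1 (hYm _ hh).1
    · intro y hy
      rcases mem_union.1 hy with hy | hy
      · rw [if_neg (hYM y hy)]; exact hM.adj y (hM2M y hy).1
      · rw [if_pos hy]; exact (hσ3 y hy).2.2.1
    · intro y hy z hz hyz
      try dsimp only at hyz
      rcases mem_union.1 hy with hy1 | hy1 <;> rcases mem_union.1 hz with hz1 | hz1
      · rw [if_neg (hYM y hy1), if_neg (hYM z hz1)] at hyz
        exact hM.inj y (hM2M y hy1).1 z (hM2M z hz1).1 hyz
      · rw [if_neg (hYM y hy1), if_pos hz1] at hyz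
        exact absurd hyz ((hσ3 z hz1).2.2.2.2 y hy1)
      · rw [if_neg (hYM z hz1), if_pos hy1] at hyz
        exact absurd hyz.symm ((hσ3 y hy1).2.2.2.2 z hz1)
      · rw [if_pos hy1, if_pos hz1] at hyz
        exact hσ1 y hy1 z hz1 hyz
    · rw [card_union_of_disjoint hd2]; omega
  -- counting edges between unmatched and matched vertices
  set B := M ∪ M.image g with hB
  set I := P \ B with hI
  have hInd : Ind G I := unmatched_ind hM hmax
  have hBc : B.card = 2 * M.card := matched_card hM
  have hIc : I.card + 2 * M.card = n + s := by
    rw [← hBc, hI, card_sdiff_add_card_eq_card (matched_sub hM)]; exact hs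
  have hlow : (s + 1) * I.card ≤ ∑ x ∈ I, (nb G B x).card := by
    rw [mul_comm, ← smul_eq_mul, ← sum_const]
    refine sum_le_sum ?_
    intro x hx
    have h1 := hP1 x (mem_sdiff.1 hx).1
    refine h1.trans (card_le_card ?_)
    intro y hy
    obtain ⟨hy1, hy2⟩ := mem_nb.1 hy
    refine mem_nb.2 ⟨?_, hy2⟩
    by_contra hyB
    exact hInd x hx y (mem_sdiff.2 ⟨hy1, hyB⟩) hy2
  have hdisj : Disjoint M (M.image g) := by
    rw [disjoint_left]
    intro x hx hx'
    obtain ⟨z, hz, rfl⟩ := mem_image.1 hx'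
    exact hM.gnot z hz hx
  have hup : ∑ x ∈ I, (nb G B x).card ≤ M.card * (m - 2) := by
    rw [double_count, hB, sum_union hdisj, sum_image (fun x hx y hy => hM.inj x hx y hy),
      ← sum_add_distrib, ← smul_eq_mul, ← sum_const]
    refine sum_le_sum ?_
    intro y hy
    have hsub : ∀ u u', u ∈ P → u' ∈ P → u' ∈ B → G.Adj u u' → (nb G I u).card ≤ m - 2 := by
      intro u u' hu hu' hub huu
      have h1 : insert u' (nb G I u) ⊆ nb G P u := by
        intro z hz
        rcases mem_insert.1 hz with rfl | hz
        · exact mem_nb.2 ⟨hu', huu⟩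
        · obtain ⟨z1, z2⟩ := mem_nb.1 hz
          exact mem_nb.2 ⟨(mem_sdiff.1 z1).1, z2⟩
      have h2 := card_le_card h1
      rw [card_insert_of_notMem] at h2
      · have := hP2 u hu; omega
      · intro hh
        exact (mem_sdiff.1 (mem_nb.1 hh).1).2 hub
    have hyP := hM.mem y hy
    have hgP := hM.gmem y hy
    have hyB : y ∈ B := mem_union_left _ hy
    have hgB : g y ∈ B := mem_union_right _ (mem_image_of_mem _ hy)
    have s1 := hsub y (g y) hyP hgP hgB (hM.adj y hy)
    have s2 := hsub (g y) y hgP hyP hyB (hM.adj y hy).symm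
    rcases (nb G I y).eq_empty_or_nonempty with e | ⟨i, hi⟩
    · rw [e, card_empty]; omega
    rcases (nb G I (g y)).eq_empty_or_nonempty with e | ⟨i', hi'⟩
    · rw [e, card_empty]; omega
    have haug : ∀ j ∈ nb G I y, ∀ j' ∈ nb G I (g y), j = j' := by
      intro j hj j' hj'
      exact no_augment hM hmax hy (mem_nb.1 hj).1 (mem_nb.1 hj').1 (mem_nb.1 hj).2 (mem_nb.1 hj').2
    have c1 : (nb G I y).card ≤ 1 := card_le_one.2 (fun a ha b hb =>
      (haug a ha i' hi').trans (haug b hb i' hi').symm)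
    have c2 : (nb G I (g y)).card ≤ 1 := card_le_one.2 (fun a ha b hb =>
      (haug i hi a ha).symm.trans (haug i hi b hb))
    omega
  have hfin := hlow.trans hup
  obtain ⟨m', rfl⟩ : ∃ m', m = m' + 18 := ⟨m - 18, by omega⟩
  rw [show m' + 18 - 2 = m' + 16 by omega] at hfin
  have hnu' : M.card ≤ m' + 17 + s := by omega
  have hI2 : (m' + 18) ^ 2 + 1 ≤ I.card + 2 * (m' + 17 + s) + (m' + 18) - s := by omega
  have h1 : M.card * (m' + 16) ≤ (m' + 17 + s) * (m' + 16) := Nat.mul_le_mul_right _ hnu'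
  have hI3 : (m' + 18) ^ 2 + 1 + s ≤ I.card + 2 * (m' + 17 + s) + (m' + 18) := by omega
  nlinarith [Nat.zero_le s, Nat.zero_le m', mul_le_mul_right hI3 (s + 1),
    Nat.mul_le_mul_left s hsm, Nat.zero_le (s * m'), Nat.zero_le (s * (m' * m'))]

lemma star (hG : ¬ Contains G (fan m)) (hm : 18 ≤ m) (hn : m ^ 2 + 1 ≤ n + m)
    (hn17 : 17 * m < n) (hW : Fintype.card W = 2 * n - 1) : ∃ v, n - 1 ≤ (nb Gᶜ univ v).card := by
  by_contra hcon
  push Not at hcon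
  have hdeg : ∀ v, n ≤ (nb G univ v).card := by
    intro v
    have h1 := hcon v
    have h2 := nb_compl_mem (G := G) (mem_univ v)
    rw [card_univ] at h2
    omega
  obtain ⟨v0⟩ : Nonempty W := by rw [← Fintype.card_pos_iff]; omega
  obtain ⟨K, _, hK, hKc⟩ := ind_of_deg hG (by omega) v0
  have h0 := hdeg v0
  obtain ⟨x0, hx0⟩ := card_pos.1 (show 0 < K.card by omega)
  obtain ⟨L, hLs, hL, hLc⟩ := ind_of_deg hG (by omega) x0
  have h0' := hdeg x0
  have hKL : Disjoint K L := by
    rw [disjoint_left]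
    intro y hy hyL
    exact hK x0 hx0 y hy (mem_nb.1 (hLs hyL)).2
  have hmiss : ∀ K : Finset W, Ind G K → ∀ k ∈ K, ∀ T : Finset W, Disjoint K T →
      (nb Gᶜ T k).card + K.card + 1 ≤ n := by
    intro K hK k hk T hT
    have h1 : (nb G K k).card = 0 := by
      rw [card_eq_zero, eq_empty_iff_forall_notMem]
      intro y hy
      exact hK k hk y (mem_nb.1 hy).1 (mem_nb.1 hy).2
    have h2 := nb_union_card (G := G) (disjoint_compl_right (a := K)) k
    rw [union_compl, h1] at h2
    have h3 := nb_compl_notmem (G := G) (S := Kᶜ) (x := k) (by simpa using hk)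
    rw [card_compl, hW] at h3
    have h4 : T ⊆ Kᶜ := fun y hy => mem_compl.2 (fun hyK => disjoint_left.1 hT hyK hy)
    have h5 := nb_card_mono (G := Gᶜ) h4 k
    have h6 := hdeg k
    have h7 : K.card ≤ Fintype.card W := card_le_univ K
    omega
  have F1 : ∀ K L : Finset W, Ind G K → Disjoint K L → n + 2 ≤ K.card + 2 * m → ∀ z, z ∉ K →
      m ≤ (nb G K z).card → (nb G L z).card ≤ 3 * m - 4 := by
    intro K L hK hKL hKc z hz hα
    by_contra hβ
    obtain ⟨M, hM, hMc⟩ := exists_subset_card_eq hα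
    have hMK : ∀ y ∈ M, y ∈ K ∧ G.Adj z y := fun y hy => mem_nb.1 (hM hy)
    apply hG
    refine fan_of_sdr hMc L (fun y hy => (hMK y hy).2) ?_ ?_
    · exact disjoint_of_subset_left (fun y hy => (hMK y hy).1) hKL
    · intro y hy
      have hyK := (hMK y hy).1
      have h4 : (nb G (nb G L z) y).card + (nb Gᶜ (nb G L z) y).card = (nb G L z).card :=
        nb_compl_notmem (fun h => disjoint_left.1 hKL hyK (nb_sub _ _ h))
      have h5 := nb_card_mono (G := Gᶜ) (nb_sub (G := G) L z) y
      have h6 := hmiss K hK y hyK L hKL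
      omega
  let Z := (K ∪ L)ᶜ
  have hZc : Z.card + K.card + L.card = 2 * n - 1 := by
    have h1 : Z.card = Fintype.card W - (K ∪ L).card := card_compl _
    have h2 : (K ∪ L).card ≤ Fintype.card W := card_le_univ _
    rw [card_union_of_disjoint hKL] at h1 h2
    omega
  have hZK : ∀ z ∈ Z, z ∉ K ∧ z ∉ L := by
    intro z hz
    have := mem_compl.1 hz
    rw [mem_union, not_or] at this
    exact this
  have hdegZ : ∀ z, n ≤ (nb G K z).card + (nb G L z).card + Z.card := by
    intro z
    have h1 := nb_union_card (G := G) (disjoint_compl_right (a := K ∪ L)) z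
    rw [union_compl, nb_union_card hKL] at h1
    have h2 : (nb G ((K ∪ L)ᶜ) z).card ≤ Z.card := card_le_card (nb_sub _ _)
    have h3 := hdeg z
    omega
  let Z1 := Z.filter (fun z => (nb G K z).card ≤ m - 1)
  let Z2 := Z.filter (fun z => ¬ (nb G K z).card ≤ m - 1)
  have hZ12 : Z1.card + Z2.card = Z.card := card_filter_add_card_filter_not _
  have hZ1 : ∀ z ∈ Z1, (nb G K z).card ≤ m - 1 := fun z hz => (mem_filter.1 hz).2
  have hZ2 : ∀ z ∈ Z2, (nb G L z).card ≤ m - 1 := by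
    intro z hz
    obtain ⟨hz1, hz2⟩ := mem_filter.1 hz
    have h1 := F1 K L hK hKL (by omega) z (hZK z hz1).1 (by omega)
    by_contra hc
    have h2 := F1 L K hL hKL.symm (by omega) z (hZK z hz1).2 (by omega)
    have h3 := hdegZ z
    omega
  have own : ∀ K Z1 : Finset W, Ind G K → Z1.card + 2 * n ≤ 2 * n + 4 * m - 5 →
      (∀ z ∈ Z1, (nb G K z).card ≤ m - 1) → ∀ x ∈ K ∪ Z1, (nb G (K ∪ Z1) x).card ≤ 5 * m - 6 := by
    intro K Z1 hK hc hz x hx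
    have h1 : (nb G (K ∪ Z1) x).card ≤ (nb G K x).card + (nb G Z1 x).card := by
      have : nb G (K ∪ Z1) x = nb G K x ∪ nb G Z1 x := by
        ext y; simp only [mem_nb, mem_union]; tauto
      rw [this]; exact card_union_le _ _
    have h2 : (nb G Z1 x).card ≤ Z1.card := card_le_card (nb_sub _ _)
    have h3 : (nb G K x).card ≤ m - 1 := by
      rcases mem_union.1 hx with hx | hx
      · have h1 : (nb G K x).card = 0 := by
          rw [card_eq_zero, eq_empty_iff_forall_notMem]
          intro y hy
          exact hK x hx y (mem_nb.1 hy).1 (mem_nb.1 hy).2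
        omega
      · exact hz x hx
    omega
  have oP := own K Z1 hK (by omega) hZ1
  have oQ := own L Z2 hL (by omega) hZ2
  have hdP : Disjoint K Z1 := by
    rw [disjoint_left]; intro y hy hy'; exact (hZK y (mem_filter.1 hy').1).1 hy
  have hdQ : Disjoint L Z2 := by
    rw [disjoint_left]; intro y hy hy'; exact (hZK y (mem_filter.1 hy').1).2 hy
  have hPQ : Disjoint (K ∪ Z1) (L ∪ Z2) := by
    rw [disjoint_left]
    intro y hy hy'
    rcases mem_union.1 hy with hy | hy <;> rcases mem_union.1 hy' with hy' | hy'
    · exact disjoint_left.1 hKL hy hy'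
    · exact (hZK y (mem_filter.1 hy').1).1 hy
    · exact (hZK y (mem_filter.1 hy).1).2 hy'
    · exact (mem_filter.1 hy').2 (mem_filter.1 hy).2
  have hun : (K ∪ Z1) ∪ (L ∪ Z2) = univ := by
    rw [eq_univ_iff_forall]
    intro y
    simp only [mem_union]
    by_cases h1 : y ∈ K
    · tauto
    by_cases h2 : y ∈ L
    · tauto
    have h3 : y ∈ Z := by simp only [Z, mem_compl, mem_union]; tauto
    by_cases h4 : (nb G K y).card ≤ m - 1
    · exact Or.inl (Or.inr (mem_filter.2 ⟨h3, h4⟩))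
    · exact Or.inr (Or.inr (mem_filter.2 ⟨h3, h4⟩))
  have cP := card_union_of_disjoint hdP
  have cQ := card_union_of_disjoint hdQ
  rcases Nat.lt_or_ge (K ∪ Z1).card n with hlt | hge
  · exact star_core hG hm hn hn17 hPQ.symm (by rw [union_comm]; exact hun) (by omega) (by omega)
      (by omega) oQ oP hdeg
  · exact star_core hG hm hn hn17 hPQ hun (by omega) hge (by omega) oP oQ hdeg

end star
end RUF

namespace RUF
open Classical Finset

section starlike
variable {V W : Type*} [Fintype V] [Fintype W] {G : SimpleGraph W} {U : SimpleGraph V} {n m : ℕ}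

/-- a leaf has a unique neighbour -/
lemma lv_unique {u v w : V} (hu : u ∈ lv U) (hv : U.Adj u v) (hw : U.Adj u w) : v = w := by
  obtain ⟨par, hpar⟩ := lv_parent (U := U)
  rw [(hpar u hu).2 v hv, (hpar u hu).2 w hw]

/-- embedding a unicyclic graph one of whose vertices carries many leaves -/
lemma star_embed (hV : Fintype.card V = n) {v : W} {C : Finset W} (hC : Ind G C)
    (hv : n - 1 ≤ (nb Gᶜ univ v).card) (hCc : n + 2 ≤ C.card + 2 * m)
    (hvC : 3 ≤ (nb Gᶜ C v).card) {c : V} (hm : 1 ≤ m)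
    (hL : 2 * m - 2 ≤ (nb U (lv U) c).card) (hdc : dg U c ≤ (nb U (lv U) c).card + 3) :
    Contains Gᶜ U := by
  have hWn : Nonempty W := ⟨v⟩
  have hd : dg U c = (nb U univ c).card := rfl
  have hs : nb U (lv U) c ⊆ nb U univ c := nb_mono (subset_univ _) c
  obtain ⟨A1, hA1⟩ : ∃ A1, A1 = nb U univ c \ nb U (lv U) c := ⟨_, rfl⟩
  have hA1c : A1.card + (nb U (lv U) c).card = dg U c := by
    rw [hA1, hd]; exact card_sdiff_add_card_eq_card hs
  have hcA : c ∉ nb U univ c := fun h => (mem_nb.1 h).2.ne rfl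
  have hdn : dg U c + 1 ≤ n := by
    rw [hd, ← hV, ← card_insert_of_notMem hcA]; exact card_le_univ _
  obtain ⟨I, hI, hIc⟩ := exists_subset_card_eq (show A1.card ≤ (nb Gᶜ C v).card by omega)
  obtain ⟨σ, hσ1, hσ2⟩ := exists_sdr A1 (fun _ => I) (fun _ _ => hIc.ge)
  have hF : n - 1 - dg U c ≤ ((C \ I).erase v).card := by
    have h1 := le_card_sdiff I C
    have h2 := pred_card_le_card_erase (s := C \ I) (a := v)
    omega
  obtain ⟨F, hF, hFc⟩ := exists_subset_card_eq hF
  have hFm : ∀ y ∈ F, y ∈ C ∧ y ∉ I ∧ y ≠ v := by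
    intro y hy
    have h1 := hF hy
    rw [mem_erase, mem_sdiff] at h1
    tauto
  obtain ⟨τ, hτ1, hτ2⟩ := exists_sdr (nb U (lv U) c) (fun _ => nb Gᶜ univ v \ (I ∪ F)) (by
    intro i _
    have h1 := le_card_sdiff (I ∪ F) (nb Gᶜ univ v)
    have h2 := card_union_le I F
    try dsimp only
    omega)
  have hτ : ∀ u ∈ nb U (lv U) c, Gᶜ.Adj v (τ u) ∧ τ u ∉ I ∧ τ u ∉ F := by
    intro u hu
    have h1 := hτ2 u hu
    rw [mem_sdiff, mem_nb, mem_union] at h1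
    tauto
  have hσ : ∀ u ∈ A1, Gᶜ.Adj v (σ u) ∧ σ u ∈ C ∧ σ u ∈ I := by
    intro u hu
    have h1 := hσ2 u hu
    have h2 := mem_nb.1 (hI h1)
    exact ⟨h2.2, h2.1, h1⟩
  have hcase : ∀ u ∈ insert c (nb U univ c), u = c ∨
      (u ≠ c ∧ u ∈ nb U (lv U) c) ∨ (u ≠ c ∧ u ∉ nb U (lv U) c ∧ u ∈ A1) := by
    intro u hu
    rcases mem_insert.1 hu with h | h
    · exact Or.inl h
    · have hne : u ≠ c := fun e => hcA (e ▸ h)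
      by_cases h2 : u ∈ nb U (lv U) c
      · exact Or.inr (Or.inl ⟨hne, h2⟩)
      · exact Or.inr (Or.inr ⟨hne, h2, by rw [hA1]; exact mem_sdiff.2 ⟨h, h2⟩⟩)
  have hlf : ∀ u ∈ nb U (lv U) c, ∀ w, U.Adj u w → w = c := by
    intro u hu w hw
    have h1 := mem_nb.1 hu
    exact lv_unique h1.1 hw h1.2.symm
  refine ext_embed hC (insert c (nb U univ c))
    (fun u => if u = c then v else if u ∈ nb U (lv U) c then τ u else σ u) ?_ ?_ ?_ F
    (fun y hy => (hFm y hy).1) ?_ ?_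
  · intro u hu w hw huw
    rcases hcase u hu with h | ⟨h1, h2⟩ | ⟨h1, h2, h3⟩ <;>
      rcases hcase w hw with k | ⟨k1, k2⟩ | ⟨k1, k2, k3⟩
    · rw [h, k]
    · simp only [h, k1, k2, if_true, if_false] at huw
      exact absurd huw (hτ w k2).1.ne
    · simp only [h, k1, k2, if_true, if_false] at huw
      exact absurd huw (hσ w k3).1.ne
    · simp only [k, h1, h2, if_true, if_false] at huw
      exact absurd huw.symm (hτ u h2).1.ne
    · simp only [k1, k2, h1, h2, if_true, if_false] at huw
      exact hτ1 u h2 w k2 huw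
    · simp only [k1, k2, h1, h2, if_true, if_false] at huw
      exact absurd (huw ▸ (hσ w k3).2.2) (hτ u h2).2.1
    · simp only [k, h1, h2, if_true, if_false] at huw
      exact absurd huw.symm (hσ u h3).1.ne
    · simp only [k1, k2, h1, h2, if_true, if_false] at huw
      exact absurd (huw ▸ (hσ u h3).2.2) (hτ w k2).2.1
    · simp only [k1, k2, h1, h2, if_false] at huw
      exact hσ1 u h3 w k3 huw
  · intro u hu w hw huw
    rcases hcase u hu with h | ⟨h1, h2⟩ | ⟨h1, h2, h3⟩ <;>
      rcases hcase w hw with k | ⟨k1, k2⟩ | ⟨k1, k2, k3⟩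
    · rw [h, k] at huw; exact absurd rfl huw.ne
    · simp only [h, k1, k2, if_true, if_false]
      exact (hτ w k2).1
    · simp only [h, k1, k2, if_true, if_false]
      exact (hσ w k3).1
    · simp only [k, h1, h2, if_true, if_false]
      exact (hτ u h2).1.symm
    · exact absurd (hlf u h2 w huw) k1
    · exact absurd (hlf u h2 w huw) k1
    · simp only [k, h1, h2, if_true, if_false]
      exact (hσ u h3).1.symm
    · exact absurd (hlf w k2 u huw.symm) h1
    · simp only [k1, k2, h1, h2, if_false]
      exact hC.compl_adj (hσ u h3).2.1 (hσ w k3).2.1 (fun e => huw.ne (hσ1 u h3 w k3 e))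
  · intro u hu w hw huw
    rcases hcase u hu with h | ⟨h1, h2⟩ | ⟨h1, h2, h3⟩
    · exact absurd (mem_insert_of_mem (mem_nb.2 ⟨mem_univ _, h ▸ huw⟩)) hw
    · exact absurd (mem_insert.2 (Or.inl (hlf u h2 w huw))) hw
    · simp only [h1, h2, if_false]
      exact (hσ u h3).2.1
  · intro u hu
    rcases hcase u hu with h | ⟨h1, h2⟩ | ⟨h1, h2, h3⟩
    · simp only [h, if_true]
      intro h4; exact (hFm v h4).2.2 rfl
    · simp only [h1, h2, if_true, if_false]
      exact (hτ u h2).2.2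
    · simp only [h1, h2, if_false]
      intro h4; exact (hFm _ h4).2.1 (hσ u h3).2.2
  · rw [card_insert_of_notMem hcA, hFc, ← hd]
    omega

/-- the case where all leaves but at most one hang on the same vertex -/
lemma caseStar (hG : ¬ Contains G (fan m)) (hm : 18 ≤ m) (hn : m ^ 2 + 1 ≤ n + m)
    (hn17 : 17 * m < n) (hW : Fintype.card W = 2 * n - 1) (hU : U.Connected)
    (hV : Fintype.card V = n) (hE : U.edgeSet.ncard = n) {K : Finset W} (hK : Ind G K)
    (hKc : n + 2 ≤ K.card + 2 * m) (hl : 2 * m - 1 ≤ (lv U).card) {c : V}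
    (hc : (lv U).card ≤ (nb U (lv U) c).card + 1) : Contains Gᶜ U := by
  have hdc := dg_le hU hV hE (by omega) c
  by_cases hx : ∃ x ∈ K, n - 1 ≤ (nb Gᶜ univ x).card
  · obtain ⟨x, hxK, hx⟩ := hx
    refine star_embed (m := m) hV hK hx hKc ?_ (c := c) (by omega) (by omega) (by omega)
    have h1 := nb_compl_mem (G := G) hxK
    have h2 : nb G K x = ∅ := by
      rw [eq_empty_iff_forall_notMem]
      intro y hy
      exact hK x hxK y (mem_nb.1 hy).1 (mem_nb.1 hy).2
    rw [h2, card_empty] at h1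
    omega
  · push Not at hx
    obtain ⟨x, hxK⟩ := card_pos.1 (show 0 < K.card by omega)
    obtain ⟨L, hLs, hL, hLc⟩ := ind_of_deg hG (by omega) x
    have h1 := nb_compl_mem (G := G) (mem_univ x)
    have h2 := hx x hxK
    rw [card_univ, hW] at h1
    have hKL : Disjoint K L := by
      rw [disjoint_left]
      intro y hy hyL
      exact hK x hxK y hy (mem_nb.1 (hLs hyL)).2
    obtain ⟨v, hv⟩ := star hG hm hn hn17 hW
    have h3 := nb_union_card (G := Gᶜ) hKL v
    have h4 := nb_union_card (G := Gᶜ) (disjoint_compl_right (a := K ∪ L)) v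
    rw [union_compl] at h4
    have h5 := card_le_card (nb_sub (G := Gᶜ) (K ∪ L)ᶜ v)
    rw [card_compl, card_union_of_disjoint hKL, hW] at h5
    by_cases h6 : 3 ≤ (nb Gᶜ K v).card
    · exact star_embed (m := m) hV hK hv hKc h6 (c := c) (by omega) (by omega) (by omega)
    · exact star_embed (m := m) hV hL hv (by omega) (by omega) (c := c) (by omega) (by omega)
        (by omega)

end starlike
end RUF

namespace RUF
open Classical Finset

section leaves
variable {V W : Type*} [Fintype V] [Fintype W] {G : SimpleGraph W} {U : SimpleGraph V} {n m : ℕ}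

/-- a set of leaves goes outside `K`, their parents inside `K` -/
lemma leaf_ext (hU : U.Connected) (hV : Fintype.card V = n) (hn : 3 ≤ n) {K : Finset W}
    (hK : Ind G K) {par : V → V} (hpar : ∀ v ∈ lv U, U.Adj v (par v) ∧ ∀ w, U.Adj v w → w = par v)
    (P : Finset V) (hP : P ⊆ lv U) (σ τ : V → W) (hσK : ∀ p ∈ P, σ (par p) ∈ K)
    (hσi : ∀ p ∈ P, ∀ q ∈ P, σ (par p) = σ (par q) → par p = par q)
    (hτK : ∀ p ∈ P, τ p ∉ K) (hτi : ∀ p ∈ P, ∀ q ∈ P, τ p = τ q → p = q)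
    (hadj : ∀ p ∈ P, ¬ G.Adj (σ (par p)) (τ p)) (hc : n ≤ K.card + P.card) : Contains Gᶜ U := by
  have hPQ : ∀ p ∈ P, par p ∉ lv U := by
    intro p hp h
    exact lv_indep hU hV hn (hP hp) h (hpar p (hP hp)).1
  have hnp : ∀ p ∈ P, par p ∉ P := fun p hp h => hPQ p hp (hP h)
  refine ext_indep hK P (P.image par) (fun u => if u ∈ P then τ u else σ u) ?_ ?_ ?_ ?_ ?_ ?_ ?_
    (by omega)
  · rw [disjoint_left]
    intro a ha ha2
    obtain ⟨p, hp, rfl⟩ := mem_image.1 ha2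
    exact hnp p hp ha
  · intro p hp v hv
    rw [(hpar p (hP hp)).2 v hv]
    exact mem_image_of_mem _ hp
  · intro q hq
    obtain ⟨p, hp, rfl⟩ := mem_image.1 hq
    simp only [hnp p hp, if_false]; exact hσK p hp
  · intro p hp
    simp only [hp, if_true]; exact hτK p hp
  · intro u hu v hv huv
    simp only [hu, hv, if_true] at huv; exact hτi u hu v hv huv
  · intro u hu v hv huv
    obtain ⟨p, hp, rfl⟩ := mem_image.1 hu
    obtain ⟨q, hq, rfl⟩ := mem_image.1 hv
    simp only [hnp p hp, hnp q hq, if_false] at huv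
    exact hσi p hp q hq huv
  · intro p hp q hq hpq
    have h1 := (hpar p (hP hp)).2 q hpq
    subst h1
    simp only [hp, hnp p hp, if_true, if_false]
    rw [SimpleGraph.compl_adj]
    refine ⟨fun e => hτK p hp (e ▸ hσK p hp), fun h => hadj p hp h.symm⟩

/-- the same with the leaves indexed by their images -/
lemma leaf_ext2 (hU : U.Connected) (hV : Fintype.card V = n) (hn : 3 ≤ n) {K : Finset W}
    (hK : Ind G K) {par : V → V} (hpar : ∀ v ∈ lv U, U.Adj v (par v) ∧ ∀ w, U.Adj v w → w = par v)
    (X : Finset W) (hXK : Disjoint X K) (φ : W → V) (hφl : ∀ z ∈ X, φ z ∈ lv U)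
    (hφi : ∀ z ∈ X, ∀ y ∈ X, φ z = φ y → z = y) (σ : V → W)
    (hσK : ∀ z ∈ X, σ (par (φ z)) ∈ K)
    (hσi : ∀ z ∈ X, ∀ y ∈ X, σ (par (φ z)) = σ (par (φ y)) → par (φ z) = par (φ y))
    (hadj : ∀ z ∈ X, ¬ G.Adj (σ (par (φ z))) z) (hc : n ≤ K.card + X.card) : Contains Gᶜ U := by
  have hinv : ∀ p ∈ X.image φ, ∃ z, z ∈ X ∧ φ z = p := by
    intro p hp
    obtain ⟨z, hz, h⟩ := mem_image.1 hp
    exact ⟨z, hz, h⟩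
  have hne : Nonempty W := by
    have : 0 < K.card ∨ 0 < X.card := by omega
    rcases this with h | h <;> exact ⟨(card_pos.1 h).choose⟩
  choose! τ hτ using hinv
  refine leaf_ext hU hV hn hK hpar (X.image φ) ?_ σ τ ?_ ?_ ?_ ?_ ?_ ?_
  · intro p hp
    obtain ⟨z, hz, rfl⟩ := mem_image.1 hp
    exact hφl z hz
  · intro p hp
    obtain ⟨z, hz, rfl⟩ := mem_image.1 hp
    exact hσK z hz
  · intro p hp q hq
    obtain ⟨z, hz, rfl⟩ := mem_image.1 hp
    obtain ⟨y, hy, rfl⟩ := mem_image.1 hq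
    exact hσi z hz y hy
  · intro p hp h
    exact disjoint_left.1 hXK (hτ p hp).1 h
  · intro p hp q hq hpq
    rw [← (hτ p hp).2, ← (hτ q hq).2, hpq]
  · intro p hp
    have h1 := hτ p hp
    have h2 := hadj _ h1.1
    rwa [h1.2] at h2
  · rw [card_image_of_injOn (fun z hz y hy h => hφi z hz y hy h)]
    exact hc

/-- few vertices of `K` have many non-neighbours outside `K` -/
lemma level (hU : U.Connected) (hV : Fintype.card V = n) (hn : 3 ≤ n) {K : Finset W}
    (hK : Ind G K) {t : ℕ} (hKc : K.card + t = n) (ht : 1 ≤ t) (hl : t ≤ (lv U).card)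
    (hH : ¬ Contains Gᶜ U) :
    ∃ K' ⊆ K, n + 1 ≤ K'.card + 2 * t ∧ ∀ x ∈ K', (nb Gᶜ Kᶜ x).card + 1 ≤ t := by
  have h1 : (K.filter (fun x => t ≤ (nb Gᶜ Kᶜ x).card)).card
      + (K.filter (fun x => ¬ t ≤ (nb Gᶜ Kᶜ x).card)).card = K.card :=
    card_filter_add_card_filter_not _
  refine ⟨K.filter (fun x => ¬ t ≤ (nb Gᶜ Kᶜ x).card), filter_subset _ _, ?_, ?_⟩
  · by_contra hcon
    obtain ⟨B, hB, hBc⟩ := exists_subset_card_eq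
      (show t ≤ (K.filter (fun x => t ≤ (nb Gᶜ Kᶜ x).card)).card by omega)
    have hBm : ∀ x ∈ B, x ∈ K ∧ t ≤ (nb Gᶜ Kᶜ x).card := fun x hx => mem_filter.1 (hB hx)
    obtain ⟨P, hP, hPc⟩ := exists_subset_card_eq hl
    obtain ⟨par, hpar⟩ := lv_parent (U := U)
    have hne : Nonempty W := ⟨(card_pos.1 (show 0 < B.card by omega)).choose⟩
    obtain ⟨σ, hσ1, hσ2⟩ := exists_sdr (P.image par) (fun _ => B) (by
      intro _ _
      have : (P.image par).card ≤ P.card := card_image_le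
      try dsimp only
      omega)
    have hσB : ∀ p ∈ P, σ (par p) ∈ B := fun p hp => hσ2 _ (mem_image_of_mem _ hp)
    obtain ⟨τ, hτ1, hτ2⟩ := exists_sdr P (fun p => nb Gᶜ Kᶜ (σ (par p))) (by
      intro p hp
      rw [hPc]; exact (hBm _ (hσB p hp)).2)
    apply hH
    refine leaf_ext hU hV hn hK hpar P hP σ τ (fun p hp => (hBm _ (hσB p hp)).1) ?_ ?_ hτ1 ?_
      (by omega)
    · intro p hp q hq h
      exact hσ1 _ (mem_image_of_mem _ hp) _ (mem_image_of_mem _ hq) h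
    · intro p hp
      exact mem_compl.1 (mem_nb.1 (hτ2 p hp)).1
    · intro p hp h
      exact ((SimpleGraph.compl_adj _ _ _).1 (mem_nb.1 (hτ2 p hp)).2).2 h
  · intro x hx
    have := (mem_filter.1 hx).2
    omega

lemma side_sum {K' X Yf : Finset W} (hm : 18 ≤ m) (hYf : Yf.card ≤ 3)
    (hα : ∀ z ∈ X, (nb G K' z).card ≤ 3 * m - 4)
    (hα' : ∀ z ∈ X, z ∉ Yf → (nb G K' z).card ≤ m - 1) :
    ∑ z ∈ X, (nb G K' z).card ≤ X.card * (m - 1) + 3 * (2 * m - 3) := by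
  have h1 : ∑ z ∈ X, (nb G K' z).card ≤
      ∑ z ∈ X, ((m - 1) + if z ∈ Yf then 2 * m - 3 else 0) := by
    refine sum_le_sum ?_
    intro z hz
    have h2 := hα z hz
    by_cases h : z ∈ Yf
    · rw [if_pos h]; omega
    · rw [if_neg h]; exact hα' z hz h
  rw [sum_add_distrib, sum_const, smul_eq_mul, ← sum_filter, sum_const, smul_eq_mul] at h1
  have h2 : (X.filter (fun z => z ∈ Yf)).card ≤ Yf.card :=
    card_le_card (fun z hz => (mem_filter.1 hz).2)
  have h3 : (X.filter (fun z => z ∈ Yf)).card * (2 * m - 3) ≤ 3 * (2 * m - 3) :=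
    Nat.mul_le_mul_right _ (h2.trans hYf)
  omega

/-- all leaf stars are small -/
lemma side_small (hU : U.Connected) (hV : Fintype.card V = n) (hm : 18 ≤ m)
    (hn17 : 17 * m < n) {K : Finset W}
    (hK : Ind G K) {t : ℕ} (hKc : K.card + t = n) (ht1 : 1 ≤ t) (ht : t ≤ 2 * m - 2)
    (hl : t ≤ (lv U).card)
    {K' : Finset W} (hK' : K' ⊆ K) (hK'c : n + 1 ≤ K'.card + 2 * t) {X Yf : Finset W}
    (hXc : X.card = t) (hXK : Disjoint X K) (hYf : Yf.card ≤ 3)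
    (hα : ∀ z ∈ X, (nb G K' z).card ≤ 3 * m - 4)
    (hα' : ∀ z ∈ X, z ∉ Yf → (nb G K' z).card ≤ m - 1)
    (hΛ : ∀ y, (nb U (lv U) y).card ≤ 5) : Contains Gᶜ U := by
  obtain ⟨P, hP, hPc⟩ := exists_subset_card_eq hl
  obtain ⟨par, hpar⟩ := lv_parent (U := U)
  have hneV : Nonempty V := ⟨(card_pos.1 (show 0 < P.card by omega)).choose⟩
  have hneW : Nonempty W := ⟨(card_pos.1 (show 0 < X.card by omega)).choose⟩
  obtain ⟨φ, hφ1, hφ2⟩ := exists_sdr X (fun _ => P) (fun _ _ => by rw [hPc, hXc])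
  obtain ⟨σ, hσ1, hσ2⟩ := exists_sdr (P.image par) (fun q => K' \
      (X.filter (fun z => par (φ z) = q)).biUnion (fun z => nb G K' z)) (by
    intro q _
    have h1 : (P.image par).card ≤ P.card := card_image_le
    have h2 : K'.card - ((X.filter (fun z => par (φ z) = q)).biUnion (fun z => nb G K' z)).card ≤
      (K' \ (X.filter (fun z => par (φ z) = q)).biUnion (fun z => nb G K' z)).card :=
      le_card_sdiff _ _
    have h3 : ((X.filter (fun z => par (φ z) = q)).biUnion (fun z => nb G K' z)).card ≤
      ∑ z ∈ X.filter (fun z => par (φ z) = q), (nb G K' z).card := card_biUnion_le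
    have h4 := side_sum (X := X.filter (fun z => par (φ z) = q)) hm hYf
      (fun z hz => hα z (mem_filter.1 hz).1) (fun z hz => hα' z (mem_filter.1 hz).1)
    have h5 : (X.filter (fun z => par (φ z) = q)).card ≤ 5 := by
      refine le_trans ?_ (hΛ q)
      refine card_le_card_of_injOn φ ?_ ?_
      · intro z hz
        obtain ⟨h6, h7⟩ := mem_filter.1 hz
        have h8 := hP (hφ2 z h6)
        refine mem_nb.2 ⟨h8, ?_⟩
        rw [← h7]; exact (hpar _ h8).1.symm
      · intro z hz y hy h
        exact hφ1 z (mem_filter.1 hz).1 y (mem_filter.1 hy).1 h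
    have h6 : (X.filter (fun z => par (φ z) = q)).card * (m - 1) ≤ 5 * (m - 1) :=
      Nat.mul_le_mul_right _ h5
    omega)
  have hm2 : ∀ z ∈ X, par (φ z) ∈ P.image par := fun z hz => mem_image_of_mem _ (hφ2 z hz)
  refine leaf_ext2 hU hV (by omega) hK hpar X hXK φ (fun z hz => hP (hφ2 z hz)) hφ1 σ ?_ ?_ ?_
    (by omega)
  · intro z hz
    exact hK' (mem_sdiff.1 (hσ2 _ (hm2 z hz))).1
  · intro z hz y hy h
    exact hσ1 _ (hm2 z hz) _ (hm2 y hy) h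
  · intro z hz h
    obtain ⟨h1, h2⟩ := mem_sdiff.1 (hσ2 _ (hm2 z hz))
    exact h2 (mem_biUnion.2 ⟨z, mem_filter.2 ⟨hz, rfl⟩, mem_nb.2 ⟨h1, h.symm⟩⟩)

set_option maxHeartbeats 1000000 in
/-- some leaf star is large -/
lemma side_large (hU : U.Connected) (hV : Fintype.card V = n) (hm : 18 ≤ m)
    (hn : m ^ 2 + 1 ≤ n + m) (hn17 : 17 * m < n) {K : Finset W}
    (hK : Ind G K) {t : ℕ} (hKc : K.card + t = n) (ht1 : 1 ≤ t) (ht : t ≤ 2 * m - 2)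
    (hl : t ≤ (lv U).card)
    {K' : Finset W} (hK' : K' ⊆ K) (hK'c : n + 1 ≤ K'.card + 2 * t) {X Yf : Finset W}
    (hXc : X.card = t) (hXK : Disjoint X K) (hYf : Yf.card ≤ 3)
    (hα : ∀ z ∈ X, (nb G K' z).card ≤ 3 * m - 4)
    (hα' : ∀ z ∈ X, z ∉ Yf → (nb G K' z).card ≤ m - 1) {c : V}
    (hc6 : 6 ≤ (nb U (lv U) c).card) (hc2 : (nb U (lv U) c).card + 2 ≤ (lv U).card) :
    Contains Gᶜ U := by
  obtain ⟨par, hpar⟩ := lv_parent (U := U)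
  have hsum := side_sum hm hYf hα hα'
  rw [← double_count G K' X, hXc] at hsum
  obtain ⟨k, rfl⟩ : ∃ k, m = k + 18 := ⟨m - 18, by omega⟩
  have hkt : t * (k + 18 - 1) ≤ (2 * k + 34) * (k + 17) :=
    Nat.mul_le_mul (by omega) (by omega)
  rw [show (2 * k + 34) * (k + 17) = 2 * k ^ 2 + 68 * k + 578 by ring] at hkt
  rw [show (k + 18) ^ 2 = k ^ 2 + 36 * k + 324 by ring] at hn
  -- the image of `c`
  obtain ⟨x1, hx1, hx1d⟩ : ∃ x ∈ K', (nb G X x).card ≤ 2 := by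
    by_contra hcon
    push Not at hcon
    have h1 : K'.card * 3 ≤ ∑ x ∈ K', (nb G X x).card := by
      rw [← smul_eq_mul, ← sum_const]
      exact sum_le_sum (fun x hx => hcon x hx)
    have h2 : 3 * (n + 1) ≤ 3 * K'.card + 6 * t := by omega
    omega
  -- the images of the other parents
  let Y := nb G X x1
  have hYd : Y.card ≤ 2 := hx1d
  let B1 := Y.biUnion (fun z => nb G K' z)
  have hB1 : B1.card ≤ 2 * (3 * (k + 18) - 4) := by
    have h1 : B1.card ≤ ∑ z ∈ Y, (nb G K' z).card := card_biUnion_le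
    have h2 : ∑ z ∈ Y, (nb G K' z).card ≤ Y.card * (3 * (k + 18) - 4) := by
      rw [← smul_eq_mul, ← sum_const]
      exact sum_le_sum (fun z hz => hα z (nb_sub _ _ hz))
    have h3 : Y.card * (3 * (k + 18) - 4) ≤ 2 * (3 * (k + 18) - 4) := Nat.mul_le_mul_right _ hYd
    omega
  let B2 := K'.filter (fun x => 7 ≤ (nb G X x).card)
  have hB2 : B2.card * 7 ≤ t * (k + 18 - 1) + 3 * (2 * (k + 18) - 3) := by
    refine le_trans ?_ hsum
    have h1 : B2.card * 7 ≤ ∑ x ∈ B2, (nb G X x).card := by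
      rw [← smul_eq_mul, ← sum_const]
      exact sum_le_sum (fun x hx => (mem_filter.1 hx).2)
    exact h1.trans (sum_le_sum_of_subset (filter_subset _ _))
  let T := K' \ (insert x1 (B1 ∪ B2))
  have hT : 2 * k + 28 ≤ T.card := by
    have h1 : K'.card - (insert x1 (B1 ∪ B2)).card ≤ T.card := le_card_sdiff _ _
    have h2 := card_insert_le x1 (B1 ∪ B2)
    have h3 := card_union_le B1 B2
    have h4 : K'.card ≤ T.card + 1 + 2 * (3 * (k + 18) - 4) + B2.card := by omega
    by_contra h5
    have h6 : 7 * (n + 1) ≤ 7 * (K'.card + 2 * t) := by omega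
    have h7 : 7 * K'.card ≤ 7 * (2 * k + 27) + 7 + 14 * (3 * k + 50) + B2.card * 7 := by omega
    have h8 : 3 * (2 * (k + 18) - 3) = 6 * k + 99 := by omega
    have h9 : t ≤ 2 * k + 34 := by omega
    omega
  have hTm : ∀ x ∈ T, x ∈ K' ∧ x ≠ x1 ∧ (∀ z ∈ Y, ¬ G.Adj x z) ∧ (nb G X x).card ≤ 6 := by
    intro x hx
    obtain ⟨h1, h2⟩ := mem_sdiff.1 hx
    rw [mem_insert, mem_union, not_or, not_or] at h2
    refine ⟨h1, h2.1, ?_, ?_⟩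
    · intro z hz h
      exact h2.2.1 (mem_biUnion.2 ⟨z, hz, mem_nb.2 ⟨h1, h.symm⟩⟩)
    · by_contra h3
      exact h2.2.2 (mem_filter.2 ⟨h1, by omega⟩)
  -- leaves
  have hlc : (lv U \ nb U (lv U) c).card + (nb U (lv U) c).card = (lv U).card :=
    card_sdiff_add_card_eq_card (nb_sub _ _)
  obtain ⟨C6, hC6, hC6c⟩ := exists_subset_card_eq hc6
  obtain ⟨D2, hD2, hD2c⟩ := exists_subset_card_eq
    (show 2 ≤ (lv U \ nb U (lv U) c).card by omega)
  have hCD : (C6 ∪ D2).card ≤ 8 := (card_union_le _ _).trans (by omega)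
  have hCDs : C6 ∪ D2 ⊆ lv U :=
    union_subset (hC6.trans (nb_sub _ _)) (hD2.trans sdiff_subset)
  obtain ⟨Q0, hQ1, hQ2, hQ3⟩ := exists_subsuperset_card_eq hCDs
    (show (C6 ∪ D2).card ≤ max t 8 by omega) (show max t 8 ≤ (lv U).card by omega)
  have hparc : ∀ p ∈ lv U, p ∈ nb U (lv U) c ↔ par p = c := by
    intro p hp
    constructor
    · intro h; exact ((hpar p hp).2 c (mem_nb.1 h).2.symm).symm
    · intro h; exact mem_nb.2 ⟨hp, h ▸ (hpar p hp).1.symm⟩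
  have hC6p : ∀ p ∈ C6, par p = c := fun p hp => (hparc p (nb_sub _ _ (hC6 hp))).1 (hC6 hp)
  have hD2p : ∀ p ∈ D2, par p ≠ c := by
    intro p hp h
    obtain ⟨h1, h2⟩ := mem_sdiff.1 (hD2 hp)
    exact h2 ((hparc p h1).2 h)
  have hneV : Nonempty V := ⟨c⟩
  have hneW : Nonempty W := ⟨x1⟩
  obtain ⟨σ0, hσ1, hσ2⟩ := exists_sdr ((Q0 \ C6).image par) (fun _ => T) (by
    intro _ _
    have h1 : ((Q0 \ C6).image par).card ≤ (Q0 \ C6).card := card_image_le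
    have h2 : (Q0 \ C6).card + C6.card = Q0.card :=
      card_sdiff_add_card_eq_card (subset_union_left.trans hQ1)
    try dsimp only
    omega)
  obtain ⟨σ, hσ⟩ : ∃ σ : V → W, σ = fun u => if u = c then x1 else σ0 u := ⟨_, rfl⟩
  have hσc : ∀ p, par p = c → σ (par p) = x1 := by
    intro p hp; rw [hσ, hp]; simp
  have hσn : ∀ p, par p ≠ c → σ (par p) = σ0 (par p) := by
    intro p hp; rw [hσ]; simp [hp]
  have hQC : ∀ p ∈ Q0, par p ≠ c → par p ∈ (Q0 \ C6).image par := by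
    intro p hp h
    exact mem_image_of_mem _ (mem_sdiff.2 ⟨hp, fun h2 => h (hC6p p h2)⟩)
  have hσT : ∀ p ∈ Q0, par p ≠ c → σ (par p) ∈ T := by
    intro p hp h
    rw [hσn p h]; exact hσ2 _ (hQC p hp h)
  have hσK : ∀ p ∈ Q0, σ (par p) ∈ K' ∧ (nb G X (σ (par p))).card ≤ 6 := by
    intro p hp
    by_cases h : par p = c
    · rw [hσc p h]; exact ⟨hx1, by omega⟩
    · have := hTm _ (hσT p hp h)
      exact ⟨this.1, this.2.2.2⟩
  have hσi : ∀ p ∈ Q0, ∀ q ∈ Q0, σ (par p) = σ (par q) → par p = par q := by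
    intro p hp q hq h
    by_cases h1 : par p = c <;> by_cases h2 : par q = c
    · rw [h1, h2]
    · rw [hσc p h1] at h
      exact absurd h.symm (hTm _ (hσT q hq h2)).2.1
    · rw [hσc q h2] at h
      exact absurd h (hTm _ (hσT p hp h1)).2.1
    · rw [hσn p h1, hσn q h2] at h
      exact hσ1 _ (hQC p hp h1) _ (hQC q hq h2) h
  obtain ⟨φ, hφ1, hφ2⟩ := hall X (fun z => Q0.filter (fun p => ¬ G.Adj (σ (par p)) z)) (by
    intro A hA
    rcases A.eq_empty_or_nonempty with hA0 | ⟨z0, hz0⟩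
    · simp [hA0]
    by_cases hA7 : 7 ≤ A.card
    · have h1 : Q0 ⊆ A.biUnion (fun z => Q0.filter (fun p => ¬ G.Adj (σ (par p)) z)) := by
        intro p hp
        by_contra h2
        have h3 : A ⊆ nb G X (σ (par p)) := by
          intro z hz
          refine mem_nb.2 ⟨hA hz, ?_⟩
          by_contra h4
          exact h2 (mem_biUnion.2 ⟨z, hz, mem_filter.2 ⟨hp, h4⟩⟩)
        have h4 := card_le_card h3
        have h5 := (hσK p hp).2
        omega
      have h2 := card_le_card h1
      have h3 := card_le_card hA
      omega
    · by_cases hAY : A ⊆ Y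
      · have h1 : D2 ⊆ A.biUnion (fun z => Q0.filter (fun p => ¬ G.Adj (σ (par p)) z)) := by
          intro p hp
          have hpQ : p ∈ Q0 := hQ1 (mem_union_right _ hp)
          exact mem_biUnion.2 ⟨z0, hz0, mem_filter.2 ⟨hpQ,
            (hTm _ (hσT p hpQ (hD2p p hp))).2.2.1 z0 (hAY hz0)⟩⟩
        have h2 := card_le_card h1
        have h3 := card_le_card hAY
        omega
      · obtain ⟨z, hz, hzY⟩ := not_subset.1 hAY
        have h1 : C6 ⊆ A.biUnion (fun z => Q0.filter (fun p => ¬ G.Adj (σ (par p)) z)) := by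
          intro p hp
          have hpQ : p ∈ Q0 := hQ1 (mem_union_left _ hp)
          refine mem_biUnion.2 ⟨z, hz, mem_filter.2 ⟨hpQ, ?_⟩⟩
          rw [hσc p (hC6p p hp)]
          intro h; exact hzY (mem_nb.2 ⟨hA hz, h⟩)
        have h2 := card_le_card h1
        omega)
  have hφQ : ∀ z ∈ X, φ z ∈ Q0 ∧ ¬ G.Adj (σ (par (φ z))) z := fun z hz => mem_filter.1 (hφ2 z hz)
  exact leaf_ext2 hU hV (by omega) hK hpar X hXK φ (fun z hz => hQ2 (hφQ z hz).1) hφ1 σ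
    (fun z hz => hK' (hσK _ (hφQ z hz).1).1)
    (fun z hz y hy => hσi _ (hφQ z hz).1 _ (hφQ y hy).1)
    (fun z hz => (hφQ z hz).2) (by omega)

lemma side (hU : U.Connected) (hV : Fintype.card V = n) (hm : 18 ≤ m)
    (hn : m ^ 2 + 1 ≤ n + m) (hn17 : 17 * m < n)
    (hc : ∀ y, (nb U (lv U) y).card + 2 ≤ (lv U).card) {K : Finset W}
    (hK : Ind G K) {t : ℕ} (hKc : K.card + t = n) (ht1 : 1 ≤ t) (ht : t ≤ 2 * m - 2)
    (hl : t ≤ (lv U).card)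
    {K' : Finset W} (hK' : K' ⊆ K) (hK'c : n + 1 ≤ K'.card + 2 * t) {X Yf : Finset W}
    (hXc : X.card = t) (hXK : Disjoint X K) (hYf : Yf.card ≤ 3)
    (hα : ∀ z ∈ X, (nb G K' z).card ≤ 3 * m - 4)
    (hα' : ∀ z ∈ X, z ∉ Yf → (nb G K' z).card ≤ m - 1) : Contains Gᶜ U := by
  by_cases h : ∃ y, 6 ≤ (nb U (lv U) y).card
  · obtain ⟨c, hc6⟩ := h
    exact side_large hU hV hm hn hn17 hK hKc ht1 ht hl hK' hK'c hXc hXK hYf hα hα' hc6 (hc c)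
  · push Not at h
    exact side_small hU hV hm hn17 hK hKc ht1 ht hl hK' hK'c hXc hXK hYf hα hα'
      (fun y => by have := h y; omega)

end leaves
end RUF

namespace RUF
open Classical Finset

section final
variable {V W : Type*} [Fintype V] [Fintype W] {G : SimpleGraph W} {U : SimpleGraph V} {n m : ℕ}

/-- one of the two symmetric cases -/
lemma half (hU : U.Connected) (hV : Fintype.card V = n) (hm : 18 ≤ m)
    (hn : m ^ 2 + 1 ≤ n + m) (hn17 : 17 * m < n)
    (hc : ∀ y, (nb U (lv U) y).card + 2 ≤ (lv U).card) {K : Finset W}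
    (hK : Ind G K) {t t' : ℕ} (hKc : K.card + t = n) (ht1 : 1 ≤ t) (ht : t ≤ 2 * m - 2)
    (hl : t ≤ (lv U).card)
    {K' : Finset W} (hK' : K' ⊆ K) (hK'c : n + 1 ≤ K'.card + 2 * t)
    (hK'd : ∀ x ∈ K', (nb Gᶜ Kᶜ x).card + 1 ≤ t)
    {Z1 Z2 F : Finset W} (h12 : Disjoint Z1 Z2) (h1F : Disjoint Z1 F) (h2F : Disjoint Z2 F)
    (h1K : Disjoint Z1 K) (h2K : Disjoint Z2 K) (hFK : Disjoint F K)
    (hZ : Z1.card + Z2.card + F.card + 1 = t + t')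
    (h1 : ∀ z ∈ Z1, (nb G K' z).card ≤ m - 1) (hF : ∀ z ∈ F, (nb G K' z).card ≤ 3 * m - 4)
    (h1t : Z1.card < t) (h2t : Z2.card < t') (hii : t + Z2.card ≤ t' + Z1.card) :
    Contains Gᶜ U := by
  obtain ⟨i, hi⟩ : ∃ i, i = t - Z1.card := ⟨_, rfl⟩
  obtain ⟨j, hj⟩ : ∃ j, j = t' - Z2.card := ⟨_, rfl⟩
  have hFc : F.card + 1 = i + j := by omega
  have hj3 : j ≤ 3 := by
    by_contra hcon
    have ha : ∀ x ∈ K', j ≤ (nb G (Z1 ∪ F) x).card := by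
      intro x hx
      have hd := hK'd x hx
      have hxK := hK' hx
      have hd2 : Disjoint (Z1 ∪ F) Z2 := disjoint_union_left.2 ⟨h12, h2F.symm⟩
      have hs : (Z1 ∪ F) ∪ Z2 ⊆ Kᶜ := by
        intro z hz
        rw [mem_compl]
        intro hzK
        rcases mem_union.1 hz with hz2 | hz2
        · rcases mem_union.1 hz2 with hz3 | hz3
          · exact disjoint_left.1 h1K hz3 hzK
          · exact disjoint_left.1 hFK hz3 hzK
        · exact disjoint_left.1 h2K hz2 hzK
      have hxs : x ∉ (Z1 ∪ F) ∪ Z2 := fun h => mem_compl.1 (hs h) hxK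
      have e1 := nb_compl_notmem (G := G) hxs
      have e2 := nb_card_mono (G := Gᶜ) hs x
      have e3 := nb_union_card (G := G) hd2 x
      have e4 := card_le_card (nb_sub (G := G) Z2 x)
      have e5 := card_union_of_disjoint hd2
      have e6 := card_union_of_disjoint h1F
      omega
    have hb : K'.card * j ≤ ∑ x ∈ K', (nb G (Z1 ∪ F) x).card := by
      rw [← smul_eq_mul, ← sum_const]
      exact sum_le_sum ha
    rw [double_count, sum_union h1F] at hb
    have hs1 : ∑ z ∈ Z1, (nb G K' z).card ≤ Z1.card * (m - 1) := by
      rw [← smul_eq_mul, ← sum_const]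
      exact sum_le_sum h1
    have hs2 : ∑ z ∈ F, (nb G K' z).card ≤ F.card * (3 * m - 4) := by
      rw [← smul_eq_mul, ← sum_const]
      exact sum_le_sum hF
    have hs3 : Z1.card * (m - 1) ≤ (2 * m - 3) * (m - 1) := Nat.mul_le_mul_right _ (by omega)
    have hs4 : F.card * (3 * m - 4) ≤ (2 * j - 1) * (3 * m - 4) :=
      Nat.mul_le_mul_right _ (by omega)
    have hs5 : (n + 1 - 2 * t) * j ≤ K'.card * j := Nat.mul_le_mul_right _ (by omega)
    have hs6 : (n + 5 - 4 * m) * j ≤ (n + 1 - 2 * t) * j := Nat.mul_le_mul_right _ (by omega)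
    obtain ⟨k, rfl⟩ : ∃ k, m = k + 18 := ⟨m - 18, by omega⟩
    obtain ⟨l, rfl⟩ : ∃ l, j = l + 4 := ⟨j - 4, by omega⟩
    have hs7 : (k ^ 2 + 31 * k + 240) * (l + 4) ≤ (n + 5 - 4 * (k + 18)) * (l + 4) := by
      refine Nat.mul_le_mul_right _ ?_
      have : (k + 18) ^ 2 = k ^ 2 + 36 * k + 324 := by ring
      omega
    have q1 : 2 * (k + 18) - 3 = 2 * k + 33 := by omega
    have q2 : k + 18 - 1 = k + 17 := by omega
    have q3 : 2 * (l + 4) - 1 = 2 * l + 7 := by omega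
    have q4 : 3 * (k + 18) - 4 = 3 * k + 50 := by omega
    rw [q1, q2] at hs3
    rw [q3, q4] at hs4
    rw [q4] at hs2
    rw [q2] at hs1
    have hfin : (k ^ 2 + 31 * k + 240) * (l + 4) ≤
      (2 * k + 33) * (k + 17) + (2 * l + 7) * (3 * k + 50) := by omega
    ring_nf at hfin
    have p1 : 0 ≤ k * l := Nat.zero_le _
    have p2 : 0 ≤ k ^ 2 * l := Nat.zero_le _
    omega
  obtain ⟨F0, hF0, hF0c⟩ := exists_subset_card_eq (show i ≤ F.card by omega)
  have hd : Disjoint Z1 F0 := disjoint_of_subset_right hF0 h1F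
  refine side hU hV hm hn hn17 hc hK hKc ht1 ht hl hK' hK'c (X := Z1 ∪ F0) (Yf := F0) ?_ ?_
    (by omega) ?_ ?_
  · rw [card_union_of_disjoint hd]; omega
  · exact disjoint_union_left.2 ⟨h1K, disjoint_of_subset_left hF0 hFK⟩
  · intro z hz
    rcases mem_union.1 hz with h | h
    · have := h1 z h; omega
    · exact hF z (hF0 h)
  · intro z hz hzF
    rcases mem_union.1 hz with h | h
    · exact h1 z h
    · exact absurd h hzF

/-- a vertex with many neighbours on both sides is the centre of a fan -/
lemma two_sided (hG : ¬ Contains G (fan m)) {K K' L' : Finset W} {t : ℕ} (hK' : K' ⊆ K)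
    (hK'd : ∀ x ∈ K', (nb Gᶜ Kᶜ x).card + 1 ≤ t) (hKL : Disjoint K L') {z : W}
    (h1 : m ≤ (nb G K' z).card) : (nb G L' z).card + 2 ≤ m + t := by
  by_contra hcon
  apply hG
  obtain ⟨M, hM, hMc⟩ := exists_subset_card_eq h1
  refine fan_of_sdr hMc L' (fun x hx => (mem_nb.1 (hM hx)).2) ?_ ?_
  · exact disjoint_of_subset_left ((hM.trans (nb_sub _ _)).trans hK') hKL
  · intro x hx
    have hxK := (mem_nb.1 (hM hx)).1
    have h2 := hK'd x hxK
    have h3 : x ∉ nb G L' z := fun h => disjoint_left.1 hKL (hK' hxK) (nb_sub _ _ h)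
    have h4 := nb_compl_notmem (G := G) h3
    have h5 : nb G L' z ⊆ Kᶜ := by
      intro y hy
      rw [mem_compl]
      intro h; exact disjoint_left.1 hKL h (nb_sub _ _ hy)
    have h6 := nb_card_mono (G := Gᶜ) h5 x
    omega

/-- many leaves, spread over at least two stars -/
lemma caseL (hG : ¬ Contains G (fan m)) (hm : 18 ≤ m)
    (hn : m ^ 2 + 1 ≤ n + m) (hn17 : 17 * m < n) (hW : Fintype.card W = 2 * n - 1)
    (hU : U.Connected) (hV : Fintype.card V = n)
    (hl : 2 * m - 1 ≤ (lv U).card)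
    (hc : ∀ y, (nb U (lv U) y).card + 2 ≤ (lv U).card) {K : Finset W}
    (hK : Ind G K) {t : ℕ} (hKc : K.card + t = n) (ht1 : 1 ≤ t) (ht : t ≤ 2 * m - 2) :
    Contains Gᶜ U := by
  by_contra hH
  obtain ⟨K', hK', hK'c, hK'd⟩ := level hU hV (by omega) hK hKc ht1 (by omega) hH
  obtain ⟨x, hx⟩ := card_pos.1 (show 0 < K'.card by omega)
  have hxK := hK' hx
  have hxd : n ≤ (nb G univ x).card := by
    have e1 := hK'd x hx
    have e2 := nb_compl_mem (G := G) (mem_univ x)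
    have e3 := nb_union_card (G := Gᶜ) (disjoint_compl_right (a := K)) x
    rw [union_compl] at e3
    rw [card_univ, hW] at e2
    have e4 := nb_compl_mem (G := G) hxK
    omega
  obtain ⟨L, hLs, hL, hLc⟩ := ind_of_deg hG (by omega) x
  have hKL : Disjoint K L := by
    rw [disjoint_left]
    intro y hy hyL
    exact hK x hxK y hy (mem_nb.1 (hLs hyL)).2
  by_cases hLn : n ≤ L.card
  · exact hH (ext_big hL (by omega))
  obtain ⟨t', ht'⟩ : ∃ t', t' = n - L.card := ⟨_, rfl⟩
  have hLc2 : L.card + t' = n := by omega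
  have ht'1 : 1 ≤ t' := by omega
  have ht'2 : t' ≤ 2 * m - 2 := by omega
  obtain ⟨L', hL', hL'c, hL'd⟩ := level hU hV (by omega) hL hLc2 ht'1 (by omega) hH
  let Z1 := (K ∪ L)ᶜ.filter (fun z => (nb G K' z).card ≤ m - 1)
  let R := (K ∪ L)ᶜ.filter (fun z => ¬ (nb G K' z).card ≤ m - 1)
  let Z2 := R.filter (fun z => (nb G L' z).card ≤ m - 1)
  let F := R.filter (fun z => ¬ (nb G L' z).card ≤ m - 1)
  have hc1 : Z1.card + R.card = ((K ∪ L)ᶜ).card := card_filter_add_card_filter_not _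
  have hc2 : Z2.card + F.card = R.card := card_filter_add_card_filter_not _
  rw [card_compl, card_union_of_disjoint hKL, hW] at hc1
  have hZ1R : Disjoint Z1 R := disjoint_filter_filter_not _ _ _
  have hZ2F : Disjoint Z2 F := disjoint_filter_filter_not _ _ _
  have hZ2R : Z2 ⊆ R := filter_subset _ _
  have hFR : F ⊆ R := filter_subset _ _
  have hZ1m : ∀ z ∈ Z1, z ∈ (K ∪ L)ᶜ ∧ (nb G K' z).card ≤ m - 1 := fun z hz => mem_filter.1 hz
  have hRm : ∀ z ∈ R, z ∈ (K ∪ L)ᶜ ∧ ¬ (nb G K' z).card ≤ m - 1 := fun z hz => mem_filter.1 hz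
  have hZ2m : ∀ z ∈ Z2, (nb G L' z).card ≤ m - 1 := fun z hz => (mem_filter.1 hz).2
  have hFm : ∀ z ∈ F, ¬ (nb G L' z).card ≤ m - 1 := fun z hz => (mem_filter.1 hz).2
  have hout : ∀ A : Finset W, (∀ z ∈ A, z ∈ (K ∪ L)ᶜ) → Disjoint A K ∧ Disjoint A L := by
    intro A hA
    constructor <;> rw [disjoint_left] <;> intro z hz hz2 <;>
      have h := hA z hz <;> rw [mem_compl, mem_union, not_or] at h
    · exact h.1 hz2
    · exact h.2 hz2
  have hZ1o := hout Z1 (fun z hz => (hZ1m z hz).1)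
  have hZ2o := hout Z2 (fun z hz => (hRm z (hZ2R hz)).1)
  have hFo := hout F (fun z hz => (hRm z (hFR hz)).1)
  have hFα : ∀ z ∈ F, (nb G K' z).card ≤ 3 * m - 4 := by
    intro z hz
    have h1 := hFm z hz
    have h2 := two_sided hG (L' := K') (z := z) hL' hL'd
      (disjoint_of_subset_right hK' hKL.symm) (by omega)
    omega
  have hFβ : ∀ z ∈ F, (nb G L' z).card ≤ 3 * m - 4 := by
    intro z hz
    have h1 := (hRm z (hFR hz)).2
    have h2 := two_sided hG (L' := L') (z := z) hK' hK'd
      (disjoint_of_subset_right hL' hKL) (by omega)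
    omega
  by_cases h1 : t ≤ Z1.card
  · obtain ⟨X, hX, hXc⟩ := exists_subset_card_eq h1
    exact hH (side hU hV hm hn hn17 hc hK hKc ht1 ht (by omega) hK' hK'c (X := X) (Yf := ∅) hXc
      (disjoint_of_subset_left hX hZ1o.1) (by simp)
      (fun z hz => by have := (hZ1m z (hX hz)).2; omega)
      (fun z hz _ => (hZ1m z (hX hz)).2))
  by_cases h2 : t' ≤ Z2.card
  · obtain ⟨X, hX, hXc⟩ := exists_subset_card_eq h2
    exact hH (side hU hV hm hn hn17 hc hL hLc2 ht'1 ht'2 (by omega) hL' hL'c (X := X) (Yf := ∅) hXc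
      (disjoint_of_subset_left hX hZ2o.2) (by simp)
      (fun z hz => by have := hZ2m z (hX hz); omega)
      (fun z hz _ => hZ2m z (hX hz)))
  have d12 : Disjoint Z1 Z2 := disjoint_of_subset_right hZ2R hZ1R
  have d1F : Disjoint Z1 F := disjoint_of_subset_right hFR hZ1R
  rcases le_total (t + Z2.card) (t' + Z1.card) with h3 | h3
  · exact hH (half hU hV hm hn hn17 hc hK (t' := t') hKc ht1 ht (by omega) hK' hK'c hK'd d12 d1F
      hZ2F hZ1o.1 hZ2o.1 hFo.1 (by omega) (fun z hz => (hZ1m z hz).2) hFα (by omega) (by omega) h3)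
  · exact hH (half hU hV hm hn hn17 hc hL (t' := t) hLc2 ht'1 ht'2 (by omega) hL' hL'c hL'd d12.symm
      hZ2F d1F hZ2o.2 hZ1o.2 hFo.2 (by omega) hZ2m hFβ (by omega) (by omega) h3)

lemma main (hm : 18 ≤ m) (hn : m ^ 2 - m + 1 ≤ n) (hU : U.Connected)
    (hV : Fintype.card V = n) (hE : U.edgeSet.ncard = n) (hW : Fintype.card W = 2 * n - 1)
    (hG : ¬ Contains G (fan m)) : Contains Gᶜ U := by
  have hn1 : m ^ 2 + 1 ≤ n + m := by omega
  have hn17 : 17 * m < n := by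
    have : 18 * m ≤ m ^ 2 := by nlinarith
    omega
  by_cases hdeg : ∀ v, n - 1 ≤ (nb Gᶜ univ v).card
  · exact caseB hG (by omega) hn17 hW hU hV hE hdeg
  push Not at hdeg
  obtain ⟨v, hv⟩ := hdeg
  obtain ⟨K, hKs, hK, hKc⟩ := ind_of_deg hG (by omega) v
  have h1 := nb_compl_mem (G := G) (mem_univ v)
  rw [card_univ, hW] at h1
  by_cases hKn : n ≤ K.card
  · exact ext_big hK (by omega)
  by_cases hl : (lv U).card ≤ 2 * m - 2
  · exact caseS hG (by omega) hn17 hW hU hV hE hK (t := n - K.card) (by omega) (by omega) hl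
  by_cases hc : ∀ y, (nb U (lv U) y).card + 2 ≤ (lv U).card
  · exact caseL hG hm hn1 hn17 hW hU hV (by omega) hc hK (t := n - K.card) (by omega) (by omega)
      (by omega)
  · push Not at hc
    obtain ⟨c, hc⟩ := hc
    exact caseStar hG hm hn1 hn17 hW hU hV hE hK (by omega) (by omega) (c := c) (by omega)

end final
end RUF

/-- **Theorem 5 (upper bound)**: for `m ≥ 18` and `n ≥ m² - m + 1`, any graph `G` on `2n - 1`
vertices contains the fan `F_m` or its complement contains any given unicyclic graph
(connected, `n` vertices, exactly `n` edges). -/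
theorem ramsey_unicyclic_fan_upper {V W : Type*} [Fintype V] [Fintype W]
    (m n : ℕ) (hm : 18 ≤ m) (hn : m ^ 2 - m + 1 ≤ n)
    (U : SimpleGraph V) (hUconn : U.Connected) (hUcard : Fintype.card V = n)
    (hUedges : U.edgeSet.ncard = n)
    (G : SimpleGraph W) (hGcard : Fintype.card W = 2 * n - 1) :
    Contains G (fan m) ∨ Contains Gᶜ U := by
  by_cases hG : Contains G (fan m)
  · exact Or.inl hG
  · exact Or.inr (RUF.main hm hn hUconn hUcard hUedges hGcard hG)
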